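/- For every d ≥ 2 there exist dimensional constants ā_d, b̄_d, ρ_d, ε̄_d ∈ (0,1) with the following property: for all Borel sets E, F ⊆ [0,1]^d and every s ≥ d − ε̄_d, if min{H^s_∞(E), H^s_∞(F)} ≥ 1 − ρ_d, then the distance set satisfies Δ(E,F) ⊇ [ā_d, b̄_d]. -/

import Mathlib

open MeasureTheory Set Metric Filter
open scoped ENNReal NNReal Topology

noncomputable section

abbrev Euc (d : ℕ) : Type := EuclideanSpace ℝ (Fin d)

/-- The closed unit cube `[0,1]^d`. -/
def unitCube (d : ℕ) : Set (Euc d) := {x | ∀ i, x i ∈ Icc (0:ℝ) 1}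

/-- The distance set `Δ(E,F) = {|x-y| : x ∈ E, y ∈ F}`. -/
def distSet {d : ℕ} (E F : Set (Euc d)) : Set ℝ :=
  {t | ∃ x ∈ E, ∃ y ∈ F, dist x y = t}

/-- `Q` is a dyadic cube of side length `l`, i.e. `Q = 2^{-k}(m + [0,1]^d)`. -/
def IsDyadicCube {d : ℕ} (Q : Set (Euc d)) (l : ℝ) : Prop :=
  ∃ (k : ℤ) (m : Fin d → ℤ), l = (2:ℝ) ^ (-k) ∧
    Q = {x | ∀ i, (m i : ℝ) * (2:ℝ) ^ (-k) ≤ x i ∧ x i ≤ ((m i : ℝ) + 1) * (2:ℝ) ^ (-k)}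

/-- The `s`-dimensional dyadic Hausdorff content: the infimum of `∑ ℓ(Q_i)^s` over
countable covers of `E` by dyadic cubes. -/
def dyadicContent {d : ℕ} (s : ℝ) (E : Set (Euc d)) : ℝ≥0∞ :=
  ⨅ (Q : ℕ → Set (Euc d)) (l : ℕ → ℝ) (_ : ∀ i, IsDyadicCube (Q i) (l i))
    (_ : E ⊆ ⋃ i, Q i), ∑' i, ENNReal.ofReal (l i ^ s)

/-!
A set of nearly full content carries, at every dyadic scale `2⁻ᴺ`, a discrete Frostman weight of
nearly full mass. Mollify two such weights at scale `τ` and consider the correlation of the two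
densities over pairs of points at distance `t`, i.e. over the sphere of radius `t`. At a fixed
coarse scale every dyadic cell must carry almost its full share of the mass, so both densities are
bounded below on the unit cube and the correlation is bounded below.

The `τ`-derivative of a mollified density is a divergence, so the `τ`-derivative of the correlation
tests spherical averages of partial derivatives. By a `TT*` argument it suffices to bound the
average of a derivative over `θ - θ'` with `θ`, `θ'` on the sphere. Rotations in `θ` and `θ'` are
two independent directions of integration by parts away from the pairs spanning a small area, and
these pairs are rare. The derivative of the correlation is thus `O(τ ^ (1 / 42 - 1))` and its
integral over all scales below a small `τ` is less than the coarse correlation. The correlation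
stays positive at scale `2⁻ᴺ`, which gives a pair of points at distance within `2 * 2⁻ᴺ` of `t`.

To let `N → ∞` inside the sets, parametrize them by Baire space. As the content is continuous along
increasing unions, the weights of scale `2⁻ᴺ` can be placed on points whose first coordinates are
bounded independently of `N`, and the parameters then have a convergent subsequence.
-/

namespace DistanceSet

section TreeContent

variable {α β : Type*} {c : ℕ → α → β} {v : ℝ≥0∞} {A : Set α} {C D : Set (ℕ × β)}

/-- The partitions of `α` into the fibres of `c 0, c 1, …` are successively finer. The pair `(k, b)`
stands for the cell `{x | c k x = b}` of generation `k`. -/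
def IsNested (c : ℕ → α → β) : Prop :=
  ∀ ⦃k j⦄, k ≤ j → ∀ ⦃x y⦄, c j x = c j y → c k x = c k y

/-- The cells indexed by `C` cover `A`. -/
def Covers (c : ℕ → α → β) (C : Set (ℕ × β)) (A : Set α) : Prop :=
  ∀ x ∈ A, ∃ k, (k, c k x) ∈ C

/-- The total mass of a family of cells in which a cell of generation `k` has mass `v ^ k`. -/
def weight (v : ℝ≥0∞) (C : Set (ℕ × β)) : ℝ≥0∞ :=
  ∑' q : ℕ × β, C.indicator (fun q => v ^ q.1) q

/-- The Hausdorff content attached to a tree of cells: the least weight of a cover. -/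
def content (c : ℕ → α → β) (v : ℝ≥0∞) (A : Set α) : ℝ≥0∞ :=
  ⨅ (C : Set (ℕ × β)) (_ : Covers c C A), weight v C

/-- The cells of `C` that are not contained in a cell of `C` of an earlier generation. -/
def maximalCells (c : ℕ → α → β) (C : Set (ℕ × β)) : Set (ℕ × β) :=
  {q | q ∈ C ∧ ∀ x, c q.1 x = q.2 → ∀ k < q.1, (k, c k x) ∉ C}

lemma content_le_weight (h : Covers c C A) : content c v A ≤ weight v C := iInf₂_le C h

lemma content_mono_left {v' : ℝ≥0∞} (h : v ≤ v') : content c v A ≤ content c v' A :=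
  iInf₂_mono fun _ _ => ENNReal.tsum_le_tsum fun _ =>
    indicator_le_indicator (pow_le_pow_left₀ zero_le h _)

lemma content_empty : content c v ∅ = 0 := by
  have h : Covers c ∅ ∅ := fun x hx => hx.elim
  simpa [weight] using content_le_weight (v := v) h

lemma exists_covers_weight_le_content_add (hA : content c v A ≠ ⊤) {ε : ℝ≥0∞} (hε : ε ≠ 0) :
    ∃ C, Covers c C A ∧ weight v C ≤ content c v A + ε := by
  have hlt : (⨅ (C : Set (ℕ × β)) (_ : Covers c C A), weight v C) < content c v A + ε :=
    ENNReal.lt_add_right hA hε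
  simp only [iInf_lt_iff] at hlt
  obtain ⟨C, hC, hlt⟩ := hlt
  exact ⟨C, hC, hlt.le⟩

lemma IsNested.exists_le_mem_maximalCells (hc : IsNested c) {x : α} {k : ℕ}
    (h : (k, c k x) ∈ C) : ∃ j ≤ k, (j, c j x) ∈ maximalCells c C := by
  classical
  have hex : ∃ k, (k, c k x) ∈ C := ⟨k, h⟩
  refine ⟨Nat.find hex, Nat.find_min' hex h, Nat.find_spec hex, fun y hy j hj => ?_⟩
  rw [hc hj.le hy]
  exact Nat.find_min hex hj

lemma IsNested.covers_maximalCells (hc : IsNested c) (h : Covers c C A) :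
    Covers c (maximalCells c C) A := fun x hx => by
  obtain ⟨k, hk⟩ := h x hx
  obtain ⟨j, -, hj⟩ := hc.exists_le_mem_maximalCells hk
  exact ⟨j, hj⟩

/-- A point covered by both `D` and `C` lies in a cell common to the two families or in a cell of
one that is contained in an earlier cell of the other; these cells still cover `A`. -/
lemma weight_maximalCells_union_add_content_le (hD : Covers c D A) (hC : Covers c C A) :
    weight v (maximalCells c (D ∪ C)) + content c v A ≤ weight v D + weight v C := by
  classical
  set M := maximalCells c (D ∪ C) with hM
  have hcov : Covers c ((D ∪ C) \ M ∪ D ∩ C) A := by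
    intro x hx
    obtain ⟨k, hk⟩ := hD x hx
    obtain ⟨j, hj⟩ := hC x hx
    rcases lt_trichotomy k j with h | rfl | h
    · exact ⟨j, Or.inl ⟨Or.inr hj, fun hm => hm.2 x rfl k h (Or.inl hk)⟩⟩
    · exact ⟨k, Or.inr ⟨hk, hj⟩⟩
    · exact ⟨k, Or.inl ⟨Or.inl hk, fun hm => hm.2 x rfl j h (Or.inr hj)⟩⟩
  refine (add_le_add_right (content_le_weight hcov) _).trans ?_
  simp only [weight, ← ENNReal.tsum_add]
  refine ENNReal.tsum_le_tsum fun q => ?_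
  have hsub : q ∈ M → q ∈ D ∪ C := fun h => h.1
  simp only [indicator_apply, mem_union, Set.mem_sdiff, mem_inter_iff] at hsub ⊢
  by_cases h1 : q ∈ D <;> by_cases h2 : q ∈ C <;> by_cases h3 : q ∈ M <;> simp_all

/-- Successively merges the covers `C 0, C 1, …`, discarding the non-maximal cells each time. -/
def mergedCovers (c : ℕ → α → β) (C : ℕ → Set (ℕ × β)) : ℕ → Set (ℕ × β)
  | 0 => C 0
  | n + 1 => maximalCells c (mergedCovers c C n ∪ C (n + 1))

section MergedCovers

variable {A : ℕ → Set α} {C : ℕ → Set (ℕ × β)}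

lemma IsNested.covers_mergedCovers (hc : IsNested c) (hC : ∀ n, Covers c (C n) (A n)) :
    ∀ n, Covers c (mergedCovers c C n) (A n)
  | 0 => hC 0
  | n + 1 => hc.covers_maximalCells fun x hx =>
      (hC (n + 1) x hx).imp fun _ hk => Or.inr hk

lemma IsNested.weight_mergedCovers_le (hc : IsNested c) (hA : Monotone A)
    (hfin : ∀ n, content c v (A n) ≠ ⊤) (hC : ∀ n, Covers c (C n) (A n)) {ε : ℕ → ℝ≥0∞}
    (hCε : ∀ n, weight v (C n) ≤ content c v (A n) + ε n) (n : ℕ) :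
    weight v (mergedCovers c C n) ≤ content c v (A n) + ∑ i ∈ Finset.range (n + 1), ε i := by
  induction n with
  | zero => simpa [mergedCovers] using hCε 0
  | succ n ih =>
    have hCA : Covers c (C (n + 1)) (A n) := fun x hx => hC (n + 1) x (hA n.le_succ hx)
    rw [← ENNReal.add_le_add_iff_right (hfin n)]
    calc weight v (mergedCovers c C (n + 1)) + content c v (A n)
        ≤ weight v (mergedCovers c C n) + weight v (C (n + 1)) :=
          weight_maximalCells_union_add_content_le (hc.covers_mergedCovers hC n) hCA
      _ ≤ (content c v (A n) + ∑ i ∈ Finset.range (n + 1), ε i)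
            + (content c v (A (n + 1)) + ε (n + 1)) := add_le_add ih (hCε (n + 1))
      _ = content c v (A (n + 1)) + ∑ i ∈ Finset.range (n + 2), ε i + content c v (A n) := by
          rw [Finset.sum_range_succ _ (n + 1)]; ring

/-- The generation of the cell of `mergedCovers c C n` containing a given point does not increase
with `n`, so that cell is eventually constant. -/
lemma IsNested.covers_eventually_mergedCovers (hc : IsNested c)
    (hC : ∀ n, Covers c (C n) (A n)) :
    Covers c {q | ∀ᶠ n in atTop, q ∈ mergedCovers c C n} (⋃ n, A n) := by
  classical
  intro x hx
  obtain ⟨n₀, hn₀⟩ := mem_iUnion.1 hx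
  have hex : ∃ k, ∃ n, (k, c k x) ∈ mergedCovers c C n := by
    obtain ⟨k, hk⟩ := hc.covers_mergedCovers hC n₀ x hn₀
    exact ⟨k, n₀, hk⟩
  obtain ⟨n₁, hn₁⟩ := Nat.find_spec hex
  refine ⟨Nat.find hex, eventually_atTop.2 ⟨n₁, fun n hn => ?_⟩⟩
  induction n, hn using Nat.le_induction with
  | base => exact hn₁
  | succ n _ ih =>
    obtain ⟨j, hjle, hj⟩ :=
      hc.exists_le_mem_maximalCells (C := mergedCovers c C n ∪ C (n + 1)) (Or.inl ih)
    rwa [le_antisymm hjle (Nat.find_min' hex ⟨n + 1, hj⟩)] at hj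

end MergedCovers

lemma weight_setOf_eventually_mem_le {D : ℕ → Set (ℕ × β)} {L : ℝ≥0∞}
    (h : ∀ n, weight v (D n) ≤ L) : weight v {q | ∀ᶠ n in atTop, q ∈ D n} ≤ L := by
  classical
  rw [weight, ENNReal.tsum_eq_iSup_sum]
  refine iSup_le fun s => ?_
  have hev : ∀ᶠ n in atTop, ∀ q ∈ s, (∀ᶠ n in atTop, q ∈ D n) → q ∈ D n := by
    refine (Filter.eventually_all_finset s).2 fun q _ => ?_
    by_cases hq : ∀ᶠ n in atTop, q ∈ D n
    · exact hq.mono fun _ hn _ => hn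
    · exact Eventually.of_forall fun _ h => absurd h hq
  obtain ⟨n, hn⟩ := hev.exists
  refine ((Finset.sum_le_sum fun q hq => ?_).trans (ENNReal.sum_le_tsum s)).trans (h n)
  by_cases hqD : q ∈ {q | ∀ᶠ n in atTop, q ∈ D n}
  · rw [indicator_of_mem hqD, indicator_of_mem (hn q hq hqD)]
  · rw [indicator_of_notMem hqD]
    exact zero_le

/-- This continuity along increasing unions of arbitrary sets makes the content a capacity in the
sense of Choquet. -/
theorem IsNested.content_iUnion_le_iSup (hc : IsNested c) {A : ℕ → Set α} (hA : Monotone A) :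
    content c v (⋃ n, A n) ≤ ⨆ n, content c v (A n) := by
  rcases eq_or_ne (⨆ n, content c v (A n)) ⊤ with htop | htop
  · exact htop ▸ le_top
  have hle : ∀ n, content c v (A n) ≤ ⨆ n, content c v (A n) := le_iSup _
  have hfin : ∀ n, content c v (A n) ≠ ⊤ := fun n => ne_top_of_le_ne_top htop (hle n)
  refine ENNReal.le_of_forall_pos_le_add fun η hη _ => ?_
  obtain ⟨ε, hε, hsum⟩ := ENNReal.exists_pos_sum_of_countable
    (ε := (η : ℝ≥0∞)) (ENNReal.coe_ne_zero.2 hη.ne') ℕ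
  choose C hC hCε using fun n =>
    exists_covers_weight_le_content_add (hfin n) (ENNReal.coe_ne_zero.2 (hε n).ne')
  refine (content_le_weight (hc.covers_eventually_mergedCovers hC)).trans
    (weight_setOf_eventually_mem_le fun n => ?_)
  exact (hc.weight_mergedCovers_le hA hfin hC hCε n).trans
    (add_le_add (hle n) ((ENNReal.sum_le_tsum _).trans hsum.le))

end TreeContent

section Frostman

variable {α β : Type*} [DecidableEq β] {c : ℕ → α → β} {r : ℝ} {N : ℕ} {S : Finset α} {w : α → ℝ}

/-- Discrete Frostman condition down to generation `N`: the point masses `w x`, `x ∈ S`, give each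
cell of generation `k ≤ N` mass at most `r ^ k`. -/
structure IsFrostmanWeight (c : ℕ → α → β) (r : ℝ) (N : ℕ) (S : Finset α) (w : α → ℝ) :
    Prop where
  nonneg : ∀ x, 0 ≤ w x
  sum_le : ∀ k ≤ N, ∀ b, ∑ x ∈ S with c k x = b, w x ≤ r ^ k

lemma IsFrostmanWeight.le_one (h : IsFrostmanWeight c r N S w) {x : α} (hx : x ∈ S) :
    w x ≤ 1 := by
  have hsum := h.sum_le 0 N.zero_le (c 0 x)
  rw [pow_zero] at hsum
  exact (Finset.single_le_sum (f := w) (fun y _ => h.nonneg y) (by simp [hx])).trans hsum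

lemma isCompact_setOf_isFrostmanWeight :
    IsCompact {w | IsFrostmanWeight c r N S w ∧ ∀ x ∉ S, w x = 0} := by
  classical
  have hcube : IsCompact (univ.pi fun x : α => Icc (0 : ℝ) (if x ∈ S then 1 else 0)) :=
    isCompact_univ_pi fun _ => isCompact_Icc
  refine hcube.of_isClosed_subset ?_ fun w hw x _ => ⟨hw.1.nonneg x, ?_⟩
  · have hset : {w | IsFrostmanWeight c r N S w ∧ ∀ x ∉ S, w x = 0} =
        {w | ∀ x, 0 ≤ w x} ∩ {w | ∀ k ≤ N, ∀ b, ∑ x ∈ S with c k x = b, w x ≤ r ^ k} ∩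
          {w | ∀ x ∉ S, w x = 0} := by
      ext w
      exact ⟨fun h => ⟨⟨h.1.nonneg, h.1.sum_le⟩, h.2⟩, fun h => ⟨⟨h.1.1, h.1.2⟩, h.2⟩⟩
    rw [hset]
    simp only [ofPred_forall]
    refine (IsClosed.inter ?_ ?_).inter ?_
    · exact isClosed_iInter fun x => isClosed_le continuous_const (continuous_apply x)
    · exact isClosed_iInter fun k => isClosed_iInter fun _ => isClosed_iInter fun b =>
        isClosed_le (by fun_prop) continuous_const
    · exact isClosed_iInter fun x => isClosed_iInter fun _ =>
        isClosed_eq (continuous_apply x) continuous_const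
  · split_ifs with hx
    · exact hw.1.le_one hx
    · exact (hw.2 x hx).le

lemma sum_add_single {α : Type*} [DecidableEq α] (T : Finset α) (w : α → ℝ) (x : α) (δ : ℝ) :
    ∑ y ∈ T, (w + Pi.single x δ : α → ℝ) y = ∑ y ∈ T, w y + if x ∈ T then δ else 0 := by
  simp only [Pi.add_apply, Finset.sum_add_distrib, Finset.sum_pi_single']

lemma IsFrostmanWeight.add_single [DecidableEq α] (h : IsFrostmanWeight c r N S w) {x : α}
    {δ : ℝ} (hδ : 0 ≤ δ) (hle : ∀ k ≤ N, ∑ y ∈ S with c k y = c k x, w y + δ ≤ r ^ k) :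
    IsFrostmanWeight c r N S (w + Pi.single x δ) where
  nonneg y := add_nonneg (h.nonneg y) ((Pi.single_nonneg.2 hδ : (0 : α → ℝ) ≤ Pi.single x δ) y)
  sum_le k hk b := by
    rw [sum_add_single]
    split_ifs with hx
    · obtain ⟨-, rfl⟩ := Finset.mem_filter.1 hx
      exact hle k hk
    · simpa using h.sum_le k hk b

lemma exists_isFrostmanWeight_forall_exists_sum_eq (hr : 0 ≤ r) :
    ∃ w, IsFrostmanWeight c r N S w ∧
      ∀ x ∈ S, ∃ k ≤ N, ∑ y ∈ S with c k y = c k x, w y = r ^ k := by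
  classical
  have hzero : (0 : α → ℝ) ∈ {w | IsFrostmanWeight c r N S w ∧ ∀ x ∉ S, w x = 0} :=
    ⟨⟨fun _ => le_rfl, fun k _ _ => by simpa using pow_nonneg hr k⟩, fun _ _ => rfl⟩
  obtain ⟨w, ⟨hw, hwS⟩, hmax⟩ := isCompact_setOf_isFrostmanWeight.exists_isMaxOn ⟨0, hzero⟩
    (f := fun w => ∑ x ∈ S, w x) (by fun_prop)
  refine ⟨w, hw, fun x hx => by_contra fun hne => ?_⟩
  push Not at hne
  obtain ⟨δ, hδ, hδle⟩ : ∃ δ > 0, ∀ k ∈ Finset.range (N + 1),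
      δ ≤ r ^ k - ∑ y ∈ S with c k y = c k x, w y := by
    refine ⟨(Finset.range (N + 1)).inf' Finset.nonempty_range_add_one _,
      (Finset.lt_inf'_iff _).2 fun k hk => ?_, fun k hk => Finset.inf'_le _ hk⟩
    have hk : k ≤ N := Nat.lt_succ_iff.1 (Finset.mem_range.1 hk)
    exact sub_pos.2 (lt_of_le_of_ne (hw.sum_le k hk _) (hne k hk))
  have hw' : IsFrostmanWeight c r N S (w + Pi.single x δ) := hw.add_single hδ.le fun k hk => by
    linarith [hδle k (Finset.mem_range.2 (Nat.lt_succ_of_le hk))]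
  have hle := isMaxOn_iff.1 hmax _ ⟨hw', fun y hy => by
    simp [hwS y hy, show y ≠ x from fun h => hy (h ▸ hx)]⟩
  rw [sum_add_single, if_pos hx] at hle
  linarith

lemma IsNested.exists_level_of_forall_exists_sum_eq (hc : IsNested c)
    (htight : ∀ x ∈ S, ∃ k ≤ N, ∑ y ∈ S with c k y = c k x, w y = r ^ k) :
    ∃ κ : α → ℕ, ∀ x ∈ S, κ x ≤ N ∧ ∑ y ∈ S with c (κ x) y = c (κ x) x, w y = r ^ κ x ∧
      ∀ y ∈ S, c (κ x) y = c (κ x) x → κ y = κ x := by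
  classical
  let levels (x : α) : Set ℕ := {k | k ≤ N ∧ ∑ y ∈ S with c k y = c k x, w y = r ^ k}
  have hmem : ∀ x ∈ S, sInf (levels x) ∈ levels x := fun x hx => Nat.sInf_mem (htight x hx)
  have hle : ∀ x ∈ S, ∀ y, c (sInf (levels x)) y = c (sInf (levels x)) x →
      sInf (levels y) ≤ sInf (levels x) := fun x hx y hxy =>
    Nat.sInf_le ⟨(hmem x hx).1, by simpa only [hxy] using (hmem x hx).2⟩
  refine ⟨fun x => sInf (levels x), fun x hx => ⟨(hmem x hx).1, (hmem x hx).2, fun y hy hxy => ?_⟩⟩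
  exact le_antisymm (hle x hx y hxy) (hle y hy x (hc (hle x hx y hxy) hxy.symm))

lemma weight_coe_finset {β : Type*} (hr : 0 ≤ r) (T : Finset (ℕ × β)) :
    weight (ENNReal.ofReal r) (T : Set (ℕ × β)) = ENNReal.ofReal (∑ q ∈ T, r ^ q.1) := by
  rw [weight, tsum_eq_sum (s := T) fun q hq => indicator_of_notMem (by simpa using hq) _,
    ENNReal.ofReal_sum_of_nonneg fun _ _ => pow_nonneg hr _]
  exact Finset.sum_congr rfl fun q hq => by
    rw [indicator_of_mem (Finset.mem_coe.2 hq), ENNReal.ofReal_pow hr]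

/-- The first tight cells above the points of `S` are disjoint, so their total weight is the mass
of `S`. -/
lemma IsNested.content_le_sum_of_forall_exists_sum_eq (hc : IsNested c) (hr : 0 ≤ r) {A : Set α}
    (hSA : c N '' A ⊆ c N '' S)
    (htight : ∀ x ∈ S, ∃ k ≤ N, ∑ y ∈ S with c k y = c k x, w y = r ^ k) :
    content c (ENNReal.ofReal r) A ≤ ENNReal.ofReal (∑ x ∈ S, w x) := by
  classical
  obtain ⟨κ, hκ⟩ := hc.exists_level_of_forall_exists_sum_eq htight
  let tightCell (x : α) : ℕ × β := (κ x, c (κ x) x)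
  have hcov : Covers c (S.image tightCell : Finset (ℕ × β)) A := by
    intro a ha
    obtain ⟨x, hx, hxa⟩ := hSA (mem_image_of_mem _ ha)
    exact ⟨κ x, Finset.mem_coe.2 (Finset.mem_image.2
      ⟨x, hx, Prod.ext rfl (hc (hκ x hx).1 hxa)⟩)⟩
  have hsum : ∑ q ∈ S.image tightCell, r ^ q.1 = ∑ x ∈ S, w x := by
    rw [← Finset.sum_fiberwise_of_maps_to fun x hx => Finset.mem_image_of_mem tightCell hx]
    refine Finset.sum_congr rfl fun q hq => ?_
    obtain ⟨x, hx, rfl⟩ := Finset.mem_image.1 hq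
    rw [← (hκ x hx).2.1]
    refine Finset.sum_congr (Finset.filter_congr fun y hy => ?_) fun _ _ => rfl
    simp only [tightCell, Prod.mk.injEq]
    refine ⟨fun h => ?_, fun ⟨h₁, h₂⟩ => h₁ ▸ h₂⟩
    have hκy := (hκ x hx).2.2 y hy h
    exact ⟨hκy, by rw [hκy, h]⟩
  rw [← hsum, ← weight_coe_finset hr]
  exact content_le_weight hcov

theorem IsNested.exists_isFrostmanWeight (hc : IsNested c) (hr : 0 ≤ r) {A : Set α}
    (hA : (c N '' A).Finite) :
    ∃ (S : Finset α) (w : α → ℝ), ↑S ⊆ A ∧ IsFrostmanWeight c r N S w ∧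
      content c (ENNReal.ofReal r) A ≤ ENNReal.ofReal (∑ x ∈ S, w x) := by
  obtain ⟨S, hSA, hS⟩ := (Set.exists_subset_bijOn A (c N))
  have hSfin : S.Finite := hS.finite_iff_finite.2 hA
  lift S to Finset α using hSfin
  obtain ⟨w, hw, htight⟩ := exists_isFrostmanWeight_forall_exists_sum_eq
    (c := c) (N := N) (S := S) hr
  exact ⟨S, w, hSA, hw, hc.content_le_sum_of_forall_exists_sum_eq hr hS.image_eq.ge htight⟩

end Frostman

section FrostmanBounds

variable {α β : Type*} [DecidableEq β] {c : ℕ → α → β} {r : ℝ} {N : ℕ} {S T : Finset α} {w : α → ℝ}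

lemma IsFrostmanWeight.sum_le_card_mul (h : IsFrostmanWeight c r N S w) {k : ℕ} (hk : k ≤ N)
    (hT : T ⊆ S) {B : Finset β} (hB : ∀ x ∈ T, c k x ∈ B) :
    ∑ x ∈ T, w x ≤ B.card * r ^ k := by
  rw [← Finset.sum_fiberwise_of_maps_to hB, ← nsmul_eq_mul]
  refine Finset.sum_le_card_nsmul _ _ _ fun b _ => le_trans ?_ (h.sum_le k hk b)
  exact Finset.sum_le_sum_of_subset_of_nonneg (Finset.filter_subset_filter _ hT)
    fun x _ _ => h.nonneg x

lemma IsFrostmanWeight.sum_sub_le_sum_cell (h : IsFrostmanWeight c r N S w) {k : ℕ} (hk : k ≤ N)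
    {B : Finset β} (hB : ∀ x, c k x ∈ B) (x : α) :
    ∑ p ∈ S, w p - (B.card - 1) * r ^ k ≤ ∑ p ∈ S with c k p = c k x, w p := by
  have hcompl : ∑ p ∈ S with ¬ c k p = c k x, w p ≤ (B.erase (c k x)).card * r ^ k :=
    h.sum_le_card_mul hk (Finset.filter_subset _ _) fun p hp =>
      Finset.mem_erase.2 ⟨(Finset.mem_filter.1 hp).2, hB p⟩
  rw [Finset.cast_card_erase_of_mem (hB x)] at hcompl
  linarith [Finset.sum_filter_add_sum_filter_not S (fun p => c k p = c k x) w]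

end FrostmanBounds

section DyadicCells

variable {d : ℕ}

/-- The index of the dyadic subcube of `unitCube d` of side `2 ^ (-k)` containing `x`. The minimum
assigns the points of the upper faces to the last cube. -/
def cell (k : ℕ) (x : Euc d) : Fin d → ℕ := fun i => min ⌊(2 : ℝ) ^ k * x i⌋₊ (2 ^ k - 1)

lemma cell_eq_cell_succ_div_two (k : ℕ) (x : Euc d) (i : Fin d) :
    cell k x i = cell (k + 1) x i / 2 := by
  have hfloor : ⌊(2 : ℝ) ^ k * x i⌋₊ = ⌊(2 : ℝ) ^ (k + 1) * x i⌋₊ / 2 := by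
    rw [← Nat.floor_div_natCast]
    congr 1
    push_cast
    ring
  have hpow : 2 ^ (k + 1) = 2 * 2 ^ k := by ring
  have hone : 1 ≤ 2 ^ k := Nat.one_le_two_pow
  simp only [cell, hfloor, hpow]
  omega

lemma isNested_cell : IsNested (cell (d := d)) := by
  intro k j hkj x y
  induction j, hkj using Nat.le_induction with
  | base => exact id
  | succ j _ ih =>
    intro h
    refine ih (funext fun i => ?_)
    rw [cell_eq_cell_succ_div_two j x, cell_eq_cell_succ_div_two j y, h]

/-- The indices of the dyadic subcubes of the unit cube of side `2 ^ (-k)`. -/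
def cellIndices (d k : ℕ) : Finset (Fin d → ℕ) :=
  Fintype.piFinset fun _ => Finset.range (2 ^ k)

lemma cell_mem_cellIndices (k : ℕ) (x : Euc d) : cell k x ∈ cellIndices d k := by
  refine Fintype.mem_piFinset.2 fun i => Finset.mem_range.2 ?_
  have hone : 1 ≤ 2 ^ k := Nat.one_le_two_pow
  simp only [cell]
  omega

lemma card_cellIndices (d k : ℕ) : (cellIndices d k).card = (2 ^ k) ^ d := by
  simp [cellIndices]

lemma finite_cell_image (k : ℕ) (A : Set (Euc d)) : (cell k '' A).Finite :=
  (cellIndices d k).finite_toSet.subset (image_subset_iff.2 fun x _ => cell_mem_cellIndices k x)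

lemma cell_bounds (k : ℕ) {x : Euc d} (hx : x ∈ unitCube d) (i : Fin d) :
    (cell k x i : ℝ) ≤ 2 ^ k * x i ∧ 2 ^ k * x i ≤ cell k x i + 1 := by
  have hpos : (0 : ℝ) < 2 ^ k := by positivity
  have hcast : ((2 ^ k - 1 : ℕ) : ℝ) = 2 ^ k - 1 := by push_cast [Nat.one_le_two_pow]; ring
  simp only [cell, Nat.cast_min, hcast]
  refine ⟨(min_le_left _ _).trans (Nat.floor_le (mul_nonneg hpos.le (hx i).1)), ?_⟩
  rcases min_choice (⌊(2 : ℝ) ^ k * x i⌋₊ : ℝ) (2 ^ k - 1) with h | h <;> rw [h]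
  · exact (Nat.lt_floor_add_one _).le
  · nlinarith [(hx i).2]

lemma norm_le_of_forall_abs_le {x : Euc d} {r : ℝ} (h : ∀ i, |x i| ≤ r) :
    ‖x‖ ≤ d * r :=
  calc ‖x‖ = ‖∑ i, EuclideanSpace.single i (x i)‖ := by
        congr 1
        ext j
        simp [Finset.sum_apply, Pi.single_apply]
    _ ≤ ∑ _ : Fin d, r := norm_sum_le_of_le _ fun i _ => by simpa using h i
    _ = d * r := by simp

lemma norm_le_of_mem_unitCube {x : Euc d} (hx : x ∈ unitCube d) : ‖x‖ ≤ d := by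
  simpa using norm_le_of_forall_abs_le fun i =>
    abs_le.2 ⟨neg_one_lt_zero.le.trans (hx i).1, (hx i).2⟩

lemma norm_sub_le_of_cell_eq {k : ℕ} {x y : Euc d} (hx : x ∈ unitCube d) (hy : y ∈ unitCube d)
    (h : cell k x = cell k y) : ‖x - y‖ ≤ d * (1 / 2) ^ k := by
  refine norm_le_of_forall_abs_le fun i => ?_
  have hpos : (0 : ℝ) < 2 ^ k := by positivity
  have hxi := cell_bounds k hx i
  have hyi := cell_bounds k hy i
  rw [h] at hxi
  rw [one_div, inv_pow, ← one_div, le_div_iff₀ hpos, ← abs_of_pos hpos, ← abs_mul, abs_le,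
    PiLp.sub_apply]
  constructor <;> nlinarith

lemma exists_card_le_forall_cell_mem (k : ℕ) (x : Euc d) :
    ∃ B : Finset (Fin d → ℕ), B.card ≤ 3 ^ d ∧
      ∀ p ∈ unitCube d, ‖x - p‖ < (1 / 2) ^ k → cell k p ∈ B := by
  let base (i : Fin d) : ℕ := ⌊(2 : ℝ) ^ k * x i - 1⌋₊
  let index (e : Fin d → Fin 3) (i : Fin d) : ℕ := min (base i + e i) (2 ^ k - 1)
  refine ⟨Finset.univ.image index, Finset.card_image_le.trans (by simp), fun p hp hxp => ?_⟩
  have hpos : (0 : ℝ) < 2 ^ k := by positivity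
  have hoffset : ∀ i, ∃ e : Fin 3, ⌊(2 : ℝ) ^ k * p i⌋₊ = base i + e := by
    intro i
    have hxpi : |2 ^ k * x i - 2 ^ k * p i| < 1 := by
      rw [← mul_sub, abs_mul, abs_of_pos hpos, ← PiLp.sub_apply]
      calc 2 ^ k * |(x - p) i| < 2 ^ k * (1 / 2) ^ k := by
            gcongr
            exact (PiLp.norm_apply_le (x - p) i).trans_lt hxp
        _ = 1 := by rw [← mul_pow]; norm_num
    rw [abs_lt] at hxpi
    have hlower : base i ≤ ⌊(2 : ℝ) ^ k * p i⌋₊ := Nat.floor_mono (by linarith)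
    have hupper : ⌊(2 : ℝ) ^ k * p i⌋₊ < base i + 3 := by
      rw [Nat.floor_lt (mul_nonneg hpos.le (hp i).1)]
      push_cast
      linarith [Nat.lt_floor_add_one ((2 : ℝ) ^ k * x i - 1)]
    exact ⟨⟨⌊(2 : ℝ) ^ k * p i⌋₊ - base i, by omega⟩, by simp only; omega⟩
  choose e he using hoffset
  exact Finset.mem_image.2 ⟨e, Finset.mem_univ _, funext fun i => by simp only [index, cell, he]⟩

lemma two_rpow_neg_pow (s : ℝ) (k : ℕ) : ((2 : ℝ) ^ (-s)) ^ k = ((1 / 2 : ℝ) ^ k) ^ s := by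
  rw [← Real.rpow_natCast, ← Real.rpow_natCast, ← Real.rpow_mul (by norm_num),
    ← Real.rpow_mul (by norm_num), one_div, Real.inv_rpow (by norm_num),
    ← Real.rpow_neg (by norm_num)]
  congr 1
  ring

lemma IsFrostmanWeight.sum_ball_le {N : ℕ} {s : ℝ} {S : Finset (Euc d)} {w : Euc d → ℝ}
    (h : IsFrostmanWeight cell ((2 : ℝ) ^ (-s)) N S w) (hS : ↑S ⊆ unitCube d) (hs0 : 0 ≤ s)
    (hsd : s ≤ d) {τ : ℝ} (hτN : (1 / 2) ^ N ≤ τ) (hτ1 : τ ≤ 1) (x : Euc d) :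
    ∑ p ∈ S with ‖x - p‖ < τ, w p ≤ 6 ^ d * τ ^ s := by
  have hτ0 : 0 < τ := lt_of_lt_of_le (by positivity) hτN
  obtain ⟨k, hk1, hk2⟩ := exists_nat_pow_near_of_lt_one hτ0 hτ1 (y := (1 / 2 : ℝ)) (by norm_num)
    (by norm_num)
  have hkN : k ≤ N := by
    by_contra! hlt
    exact (pow_lt_pow_right_of_lt_one₀ (by norm_num) (by norm_num) hlt).not_ge (hτN.trans hk2)
  obtain ⟨B, hBcard, hB⟩ := exists_card_le_forall_cell_mem k x
  have hτ2 : (1 / 2 : ℝ) ^ k ≤ 2 * τ := by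
    rw [pow_succ] at hk1
    linarith
  calc ∑ p ∈ S with ‖x - p‖ < τ, w p
      ≤ B.card * ((2 : ℝ) ^ (-s)) ^ k :=
        h.sum_le_card_mul hkN (Finset.filter_subset _ _) fun p hp =>
          hB p (hS (Finset.mem_filter.1 hp).1) ((Finset.mem_filter.1 hp).2.trans_le hk2)
    _ ≤ 3 ^ d * (2 * τ) ^ s := by
        rw [two_rpow_neg_pow]
        gcongr
        exact_mod_cast hBcard
    _ = 3 ^ d * (2 ^ s * τ ^ s) := by rw [Real.mul_rpow (by norm_num) hτ0.le]
    _ ≤ 3 ^ d * (2 ^ (d : ℝ) * τ ^ s) := by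
        gcongr
        norm_num
    _ = 6 ^ d * τ ^ s := by rw [Real.rpow_natCast, ← mul_assoc, ← mul_pow]; norm_num

/-- The closed dyadic cube with index `m` and side `2 ^ (-k)`. -/
def dyadicCube (k : ℕ) (m : Fin d → ℕ) : Set (Euc d) :=
  {x | ∀ i, ((m i : ℤ) : ℝ) * (2 : ℝ) ^ (-(k : ℤ)) ≤ x i ∧
    x i ≤ (((m i : ℤ) : ℝ) + 1) * (2 : ℝ) ^ (-(k : ℤ))}

lemma isDyadicCube_dyadicCube (k : ℕ) (m : Fin d → ℕ) :
    IsDyadicCube (dyadicCube k m) ((2 : ℝ) ^ (-(k : ℤ))) :=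
  ⟨k, fun i => m i, rfl, rfl⟩

lemma mem_dyadicCube_cell (k : ℕ) {x : Euc d} (hx : x ∈ unitCube d) :
    x ∈ dyadicCube k (cell k x) := by
  intro i
  have hpos : (0 : ℝ) < 2 ^ k := by positivity
  have hb := cell_bounds k hx i
  rw [zpow_neg, zpow_natCast, ← div_eq_mul_inv, ← div_eq_mul_inv, div_le_iff₀ hpos,
    le_div_iff₀ hpos, mul_comm (x i)]
  simpa only [Int.cast_natCast] using hb

/-- The cover in `dyadicContent` is indexed by `ℕ`, so the cells not used by a given cover are
replaced by cubes of negligible size. -/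
theorem dyadicContent_le_content {s : ℝ} (hs : 0 < s) {A : Set (Euc d)} (hA : A ⊆ unitCube d) :
    dyadicContent s A ≤ content cell (ENNReal.ofReal ((2 : ℝ) ^ (-s))) A := by
  classical
  refine le_iInf₂ fun C hC => ENNReal.le_of_forall_pos_le_add fun η hη _ => ?_
  obtain ⟨ε, hε, hεsum⟩ := ENNReal.exists_pos_sum_of_countable (ε := (η : ℝ≥0∞))
    (ENNReal.coe_ne_zero.2 hη.ne') ℕ
  obtain ⟨_⟩ := nonempty_denumerable (ℕ × (Fin d → ℕ))
  let e : ℕ ≃ ℕ × (Fin d → ℕ) := (Denumerable.eqv _).symm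
  set r : ℝ := (2 : ℝ) ^ (-s) with hr
  have hr0 : 0 ≤ r := by positivity
  have hr1 : r < 1 := Real.rpow_lt_one_of_one_lt_of_neg one_lt_two (neg_lt_zero.2 hs)
  choose K hK using fun n => exists_pow_lt_of_lt_one (NNReal.coe_pos.2 (hε n)) hr1
  let level (n : ℕ) : ℕ := if e n ∈ C then (e n).1 else K n
  have hcov : A ⊆ ⋃ n, dyadicCube (level n) (e n).2 := by
    intro x hx
    obtain ⟨k, hk⟩ := hC x hx
    refine mem_iUnion.2 ⟨e.symm (k, cell k x), ?_⟩
    simpa [level, hk] using mem_dyadicCube_cell k (hA hx)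
  have hterm : ∀ n, ENNReal.ofReal (((2 : ℝ) ^ (-(level n : ℤ))) ^ s) ≤
      C.indicator (fun q => ENNReal.ofReal r ^ q.1) (e n) + ε n := by
    intro n
    have hpow : ((2 : ℝ) ^ (-(level n : ℤ))) ^ s = r ^ level n := by
      rw [hr, two_rpow_neg_pow, zpow_neg, zpow_natCast, one_div, inv_pow]
    rw [hpow, ENNReal.ofReal_pow hr0]
    by_cases h : e n ∈ C
    · simp [level, h]
    · simpa [level, h, ← ENNReal.ofReal_pow hr0] using ENNReal.ofReal_le_ofReal (hK n).le
  refine (iInf₂_le_of_le _ _ (iInf₂_le_of_le (fun n => isDyadicCube_dyadicCube _ _) hcov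
    le_rfl)).trans ((ENNReal.tsum_le_tsum hterm).trans ?_)
  rw [ENNReal.tsum_add, e.tsum_eq (C.indicator fun q => ENNReal.ofReal r ^ q.1)]
  exact add_le_add_right hεsum.le _

end DyadicCells

section SphereMeasure

variable {d : ℕ}

/-- A rotation-invariant measure on the sphere of radius `t` about the origin: the image of Lebesgue
measure on the unit ball under radial projection. It is not normalized. -/
def sphereMeasure (d : ℕ) (t : ℝ) : Measure (Euc d) :=
  (volume.restrict (ball 0 1)).map fun z => (t * ‖z‖⁻¹) • z

lemma measurable_radialProjection (t : ℝ) : Measurable fun z : Euc d => (t * ‖z‖⁻¹) • z :=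
  (measurable_norm.inv.const_mul t).smul measurable_id

lemma sphereMeasure_univ (t : ℝ) :
    sphereMeasure d t univ = volume (ball (0 : Euc d) 1) := by
  rw [sphereMeasure, Measure.map_apply (measurable_radialProjection t) MeasurableSet.univ,
    preimage_univ, Measure.restrict_apply_univ]

instance (t : ℝ) : IsFiniteMeasure (sphereMeasure d t) :=
  ⟨by rw [sphereMeasure_univ]; exact measure_ball_lt_top⟩

lemma sphereMeasure_real_univ (t : ℝ) :
    (sphereMeasure d t).real univ = volume.real (ball (0 : Euc d) 1) := by
  rw [measureReal_def, sphereMeasure_univ, measureReal_def]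

lemma ae_norm_eq_sphereMeasure (hd : 0 < d) {t : ℝ} (ht : 0 ≤ t) :
    ∀ᵐ θ ∂sphereMeasure d t, ‖θ‖ = t := by
  have : Nonempty (Fin d) := ⟨⟨0, hd⟩⟩
  rw [sphereMeasure, ae_map_iff (measurable_radialProjection t).aemeasurable
    (measurableSet_eq_fun measurable_norm measurable_const)]
  have hne : ∀ᵐ z : Euc d, z ≠ 0 := by simp [ae_iff]
  filter_upwards [ae_restrict_of_ae hne] with z hz
  rw [norm_smul, norm_mul, norm_inv, norm_norm, mul_assoc,
    inv_mul_cancel₀ (norm_ne_zero_iff.2 hz), mul_one, Real.norm_of_nonneg ht]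

lemma map_sphereMeasure (t : ℝ) (R : Euc d ≃ₗᵢ[ℝ] Euc d) :
    (sphereMeasure d t).map R = sphereMeasure d t := by
  have hcomm : (R ∘ fun z : Euc d => (t * ‖z‖⁻¹) • z) = (fun z => (t * ‖z‖⁻¹) • z) ∘ R := by
    ext1 z
    simp
  have hball : R ⁻¹' ball 0 1 = ball 0 1 := by
    ext z
    simp
  have hR : (volume.restrict (ball 0 1)).map R = volume.restrict (ball 0 1) := by
    conv_lhs => rw [← hball]
    exact (R.measurePreserving.restrict_preimage measurableSet_ball).map_eq
  rw [sphereMeasure, Measure.map_map R.continuous.measurable (measurable_radialProjection t), hcomm,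
    ← Measure.map_map (measurable_radialProjection t) R.continuous.measurable, hR]

lemma volume_ball_inter_abs_apply_lt_le (i : Fin d) {l : ℝ} (hl : 0 ≤ l) :
    volume (ball (0 : Euc d) 1 ∩ {z | |z i| < l}) ≤ ENNReal.ofReal (2 ^ d * l) := by
  classical
  let box (k : Fin d) : Set ℝ := Ioo (-if k = i then l else 1) (if k = i then l else 1)
  have hsub : ball (0 : Euc d) 1 ∩ {z | |z i| < l} ⊆ WithLp.ofLp ⁻¹' univ.pi box := by
    rintro z ⟨hz, hzi⟩ k -
    refine abs_lt.1 ?_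
    split_ifs with hk
    · exact hk ▸ hzi
    · exact (PiLp.norm_apply_le z k).trans_lt (mem_ball_zero_iff.1 hz)
  refine (measure_mono hsub).trans (le_of_eq ?_)
  rw [(PiLp.volume_preserving_ofLp (Fin d)).measure_preimage
    (MeasurableSet.univ_pi fun _ => measurableSet_Ioo).nullMeasurableSet, volume_pi_pi]
  simp only [Real.volume_Ioo, sub_neg_eq_add, ← two_mul]
  rw [← ENNReal.ofReal_prod_of_nonneg fun k _ => by split_ifs <;> positivity,
    Finset.prod_mul_distrib]
  simp

lemma volume_ball_inter_abs_inner_lt_le (e : Euc d) (he : ‖e‖ = 1) {l : ℝ} (hl : 0 ≤ l) :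
    volume (ball (0 : Euc d) 1 ∩ {z | |inner ℝ e z| < l}) ≤ ENNReal.ofReal (2 ^ d * l) := by
  obtain ⟨i⟩ : Nonempty (Fin d) := by
    by_contra hempty
    have := not_nonempty_iff.1 hempty
    simp [Subsingleton.elim e 0] at he
  let R := (ℝ ∙ (e - EuclideanSpace.single i (1 : ℝ)))ᗮ.reflection
  have hR : R e = EuclideanSpace.single i (1 : ℝ) := Submodule.reflection_sub (by simp [he])
  have hcoord (z : Euc d) : (R z) i = inner ℝ e z := by
    rw [← R.inner_map_map e z, hR, EuclideanSpace.inner_single_left]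
    simp
  have hpre : ball (0 : Euc d) 1 ∩ {z | |inner ℝ e z| < l} =
      R ⁻¹' (ball 0 1 ∩ {z | |z i| < l}) := by
    ext z
    simp [hcoord]
  have hmeas : MeasurableSet (ball (0 : Euc d) 1 ∩ {z | |z i| < l}) :=
    measurableSet_ball.inter (isOpen_lt (by fun_prop) continuous_const).measurableSet
  rw [hpre, R.measurePreserving.measure_preimage hmeas.nullMeasurableSet]
  exact volume_ball_inter_abs_apply_lt_le i hl

/-- A measure has slab constant `C` when a slab of half-width `l` about any hyperplane through the
origin has measure at most `C * l`. -/
def HasSlabBound (σ : Measure (Euc d)) (C : ℝ) : Prop :=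
  ∀ e : Euc d, ‖e‖ = 1 → ∀ l > 0, σ {θ | |inner ℝ e θ| < l} ≤ ENNReal.ofReal (C * l)

lemma hasSlabBound_sphereMeasure {t : ℝ} (ht : 0 < t) :
    HasSlabBound (sphereMeasure d t) (2 ^ d / t) := by
  intro e he l hl
  have hmeas : MeasurableSet {θ : Euc d | |inner ℝ e θ| < l} :=
    (isOpen_lt (by fun_prop) continuous_const).measurableSet
  rw [sphereMeasure, Measure.map_apply (measurable_radialProjection t) hmeas,
    Measure.restrict_apply (measurable_radialProjection t hmeas), div_mul_eq_mul_div, mul_div_assoc]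
  refine (measure_mono ?_).trans (volume_ball_inter_abs_inner_lt_le e he (div_pos hl ht).le)
  rintro z ⟨hzl, hz1⟩
  refine ⟨hz1, ?_⟩
  rcases eq_or_ne z 0 with rfl | hz
  · simpa using div_pos hl ht
  have : 0 < ‖z‖ := norm_pos_iff.2 hz
  simp only [mem_preimage, mem_ofPred_eq, inner_smul_right, abs_mul, abs_of_pos ht, abs_inv,
    abs_norm] at hzl ⊢
  rw [lt_div_iff₀ ht]
  calc |inner ℝ e z| * t = t * ‖z‖⁻¹ * |inner ℝ e z| * ‖z‖ := by field_simp
    _ < l * ‖z‖ := by gcongr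
    _ ≤ l := mul_le_of_le_one_right hl.le (mem_ball_zero_iff.1 hz1).le

end SphereMeasure

section PlaneArea

variable {d : ℕ} {σ : Measure (Euc d)} {C : ℝ} {i j : Fin d}

/-- The signed area of the parallelogram spanned by the projections of `θ` and `θ'` to the
`(i, j)` coordinate plane. -/
def planeArea (i j : Fin d) (θ θ' : Euc d) : ℝ := θ i * θ' j - θ j * θ' i

@[fun_prop]
lemma continuous_planeArea (i j : Fin d) :
    Continuous fun p : Euc d × Euc d => planeArea i j p.1 p.2 := by
  unfold planeArea
  fun_prop

lemma measurableSet_abs_planeArea_lt (i j : Fin d) (c : ℝ) :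
    MeasurableSet {p : Euc d × Euc d | |planeArea i j p.1 p.2| < c} :=
  (isOpen_lt (by fun_prop) continuous_const).measurableSet

lemma HasSlabBound.measure_abs_inner_lt_sq_le (hσ : HasSlabBound σ C) {u : Euc d} {q : ℝ}
    (hq : 0 < q) (hu : q ≤ ‖u‖) : σ {θ | |inner ℝ u θ| < q ^ 2} ≤ ENNReal.ofReal (C * q) := by
  have hpos : 0 < ‖u‖ := hq.trans_le hu
  refine (measure_mono fun θ hθ => ?_).trans
    (hσ (‖u‖⁻¹ • u) (norm_smul_inv_norm (norm_pos_iff.1 hpos)) q hq)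
  simp only [mem_ofPred_eq] at hθ ⊢
  rw [inner_smul_left, conj_trivial, abs_mul, abs_of_pos (inv_pos.2 hpos), inv_mul_lt_iff₀ hpos]
  nlinarith

lemma HasSlabBound.measure_abs_apply_lt_le (hσ : HasSlabBound σ C) (i : Fin d) {q : ℝ}
    (hq : 0 < q) : σ {θ | |θ i| < q} ≤ ENNReal.ofReal (C * q) := by
  simpa [EuclideanSpace.inner_single_left] using
    hσ (EuclideanSpace.single i 1) (by simp) q hq

lemma HasSlabBound.measure_abs_planeArea_lt_sq_le (hσ : HasSlabBound σ C) (hij : i ≠ j)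
    {θ : Euc d} {q : ℝ} (hq : 0 < q) (hθ : q ≤ |θ i|) :
    σ {θ' | |planeArea i j θ θ'| < q ^ 2} ≤ ENNReal.ofReal (C * q) := by
  let u : Euc d := EuclideanSpace.single j (θ i) - EuclideanSpace.single i (θ j)
  have hu : q ≤ ‖u‖ := by
    have huj : u j = θ i := by simp [u, hij.symm]
    exact (huj ▸ hθ).trans (PiLp.norm_apply_le u j)
  have harea (θ' : Euc d) : planeArea i j θ θ' = inner ℝ u θ' := by
    simp [u, planeArea, inner_sub_left, EuclideanSpace.inner_single_left]
  simpa only [harea] using hσ.measure_abs_inner_lt_sq_le hq hu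

variable [IsFiniteMeasure σ]

lemma HasSlabBound.prod_real_abs_planeArea_lt_sq_le (hσ : HasSlabBound σ C) (hC : 0 ≤ C)
    (hij : i ≠ j) {q : ℝ} (hq : 0 < q) :
    (σ.prod σ).real {p | |planeArea i j p.1 p.2| < q ^ 2} ≤ 2 * C * σ.real univ * q := by
  have hmeas : MeasurableSet {θ : Euc d | |θ i| < q} :=
    (isOpen_lt (by fun_prop) continuous_const).measurableSet
  have hfibre (θ : Euc d) : σ (Prod.mk θ ⁻¹' {p | |planeArea i j p.1 p.2| < q ^ 2}) ≤
      {θ | |θ i| < q}.indicator (fun _ => σ univ) θ + ENNReal.ofReal (C * q) := by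
    by_cases hθ : |θ i| < q
    · rw [indicator_of_mem (by exact hθ)]
      exact (measure_mono (subset_univ _)).trans le_self_add
    · rw [indicator_of_notMem (by exact hθ), zero_add]
      exact hσ.measure_abs_planeArea_lt_sq_le hij hq (not_lt.1 hθ)
  refine ENNReal.toReal_le_of_le_ofReal (by positivity) ?_
  calc (σ.prod σ) {p | |planeArea i j p.1 p.2| < q ^ 2}
      ≤ ∫⁻ θ, {θ | |θ i| < q}.indicator (fun _ => σ univ) θ + ENNReal.ofReal (C * q) ∂σ := by
        rw [Measure.prod_apply (measurableSet_abs_planeArea_lt i j _)]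
        exact lintegral_mono hfibre
    _ = σ univ * σ {θ | |θ i| < q} + ENNReal.ofReal (C * q) * σ univ := by
        rw [lintegral_add_right _ measurable_const, lintegral_indicator_const hmeas,
          lintegral_const]
    _ ≤ σ univ * ENNReal.ofReal (C * q) + ENNReal.ofReal (C * q) * σ univ := by
        gcongr
        exact hσ.measure_abs_apply_lt_le i hq
    _ = ENNReal.ofReal (2 * C * σ.real univ * q) := by
        rw [← ofReal_measureReal, ← ENNReal.ofReal_mul (by positivity),
          ← ENNReal.ofReal_mul (by positivity),
          ← ENNReal.ofReal_add (by positivity) (by positivity)]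
        congr 1
        ring

lemma sq_div_sq_add_sq_le_of_sq_le_abs {D q : ℝ} (hq : 0 < q) (hq1 : q ≤ 1) (hD : q ^ 2 ≤ |D|) :
    (q ^ 3) ^ 2 / (D ^ 2 + (q ^ 3) ^ 2) ≤ q := by
  have hD2 : (q ^ 2) ^ 2 ≤ D ^ 2 := sq_abs D ▸ pow_le_pow_left₀ (by positivity) hD 2
  rw [div_le_iff₀ (by positivity)]
  calc (q ^ 3) ^ 2 = q * (q * (q ^ 2) ^ 2) := by ring
    _ ≤ q * (D ^ 2 + (q ^ 3) ^ 2) := by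
        gcongr
        nlinarith [mul_le_of_le_one_left (sq_nonneg (q ^ 2)) hq1, sq_nonneg (q ^ 3)]

theorem HasSlabBound.integral_sq_div_planeArea_sq_add_sq_le (hσ : HasSlabBound σ C) (hC : 0 ≤ C)
    (hij : i ≠ j) {q : ℝ} (hq : 0 < q) (hq1 : q ≤ 1) :
    ∫ p, (q ^ 3) ^ 2 / (planeArea i j p.1 p.2 ^ 2 + (q ^ 3) ^ 2) ∂σ.prod σ ≤
      (2 * C * σ.real univ + (σ.prod σ).real univ) * q := by
  set small := {p : Euc d × Euc d | |planeArea i j p.1 p.2| < q ^ 2}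
  have hmeas : MeasurableSet small := measurableSet_abs_planeArea_lt i j _
  have hbound (p : Euc d × Euc d) : (q ^ 3) ^ 2 / (planeArea i j p.1 p.2 ^ 2 + (q ^ 3) ^ 2) ≤
      small.indicator (fun _ => (1 : ℝ)) p + q := by
    by_cases hp : p ∈ small
    · rw [indicator_of_mem hp]
      have hle : (q ^ 3) ^ 2 / (planeArea i j p.1 p.2 ^ 2 + (q ^ 3) ^ 2) ≤ 1 :=
        div_le_one_of_le₀ (le_add_of_nonneg_left (sq_nonneg _)) (by positivity)
      linarith
    · rw [indicator_of_notMem hp, zero_add]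
      exact sq_div_sq_add_sq_le_of_sq_le_abs hq hq1 (not_lt.1 hp)
  have hint : Integrable (small.indicator fun _ => (1 : ℝ)) (σ.prod σ) :=
    (integrable_const 1).indicator hmeas
  calc _ ≤ ∫ p, small.indicator (fun _ => (1 : ℝ)) p + q ∂σ.prod σ :=
        integral_mono_of_nonneg (Eventually.of_forall fun p => by positivity)
          (hint.add (integrable_const q)) (Eventually.of_forall hbound)
    _ = (σ.prod σ).real small + (σ.prod σ).real univ * q := by
        rw [integral_add hint (integrable_const q), integral_indicator_const _ hmeas,
          integral_const]
        simp
    _ ≤ _ := by linarith [hσ.prod_real_abs_planeArea_lt_sq_le hC hij hq]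

end PlaneArea

section SphericalByParts

variable {d : ℕ} {i j : Fin d} {σ : Measure (Euc d)}

lemma integrable_of_continuous_of_ae_norm_le {E : Type*} [NormedAddCommGroup E] [ProperSpace E]
    [MeasurableSpace E] [OpensMeasurableSpace E] {μ : Measure E} [IsFiniteMeasure μ] {r : ℝ}
    (hμ : ∀ᵐ x ∂μ, ‖x‖ ≤ r) {f : E → ℝ} (hf : Continuous f) : Integrable f μ := by
  obtain ⟨B, hB⟩ :=
    (isCompact_closedBall (0 : E) r).exists_bound_of_continuousOn hf.continuousOn
  refine Integrable.of_bound hf.aestronglyMeasurable B ?_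
  filter_upwards [hμ] with x hx using hB x (mem_closedBall_zero_iff.2 hx)

/-- A measure concentrated on the closed unit ball and invariant under all linear isometries. -/
structure IsIsotropic (σ : Measure (Euc d)) : Prop where
  map_eq : ∀ R : Euc d ≃ₗᵢ[ℝ] Euc d, σ.map R = σ
  ae_norm_le_one : ∀ᵐ θ ∂σ, ‖θ‖ ≤ 1

lemma isIsotropic_sphereMeasure (hd : 0 < d) {t : ℝ} (ht0 : 0 ≤ t) (ht1 : t ≤ 1) :
    IsIsotropic (sphereMeasure d t) where
  map_eq := map_sphereMeasure t
  ae_norm_le_one := (ae_norm_eq_sphereMeasure hd ht0).mono fun _ h => h.le.trans ht1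

lemma IsIsotropic.ae_prod_norm_le_one [SFinite σ] (hσ : IsIsotropic σ) :
    ∀ᵐ p ∂σ.prod σ, ‖p‖ ≤ 1 := by
  filter_upwards [Measure.quasiMeasurePreserving_fst.ae hσ.ae_norm_le_one,
    Measure.quasiMeasurePreserving_snd.ae hσ.ae_norm_le_one] with p h₁ h₂ using max_le h₁ h₂

/-- The rotation by the angle `α` in the `(i, j)` coordinate plane. -/
def planeRotation (i j : Fin d) (α : ℝ) (θ : Euc d) : Euc d :=
  θ + (((Real.cos α - 1) * θ i - Real.sin α * θ j) • EuclideanSpace.single i (1 : ℝ)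
    + (Real.sin α * θ i + (Real.cos α - 1) * θ j) • EuclideanSpace.single j (1 : ℝ))

/-- The velocity field of `planeRotation i j`. -/
def rotationField (i j : Fin d) (θ : Euc d) : Euc d :=
  (-θ j) • EuclideanSpace.single i (1 : ℝ) + θ i • EuclideanSpace.single j (1 : ℝ)

@[fun_prop]
lemma continuous_rotationField (i j : Fin d) : Continuous (rotationField i j) := by
  unfold rotationField
  fun_prop

lemma planeRotation_zero (i j : Fin d) (θ : Euc d) : planeRotation i j 0 θ = θ := by
  simp [planeRotation]

lemma norm_planeRotation (hij : i ≠ j) (α : ℝ) (θ : Euc d) : ‖planeRotation i j α θ‖ = ‖θ‖ := by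
  rw [← sq_eq_sq₀ (norm_nonneg _) (norm_nonneg _), planeRotation, norm_add_sq_real,
    norm_add_sq_real]
  simp only [inner_add_right, inner_smul_right, inner_smul_left,
    EuclideanSpace.inner_single_right, norm_smul]
  simp [hij]
  linear_combination ((θ i) ^ 2 + (θ j) ^ 2) * Real.sin_sq_add_cos_sq α

/-- `planeRotation i j α` as a linear isometry. -/
def planeRotationEquiv (hij : i ≠ j) (α : ℝ) : Euc d ≃ₗᵢ[ℝ] Euc d :=
  LinearIsometry.toLinearIsometryEquiv
    { toFun := planeRotation i j α
      map_add' := fun x y => by simp only [planeRotation, PiLp.add_apply]; module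
      map_smul' := fun c x => by
        simp only [planeRotation, PiLp.smul_apply, smul_eq_mul, RingHom.id_apply]; module
      norm_map' := norm_planeRotation hij α } rfl

lemma hasDerivAt_planeRotation (hij : i ≠ j) (α : ℝ) (θ : Euc d) :
    HasDerivAt (fun a => planeRotation i j a θ) (rotationField i j (planeRotation i j α θ)) α := by
  have hcos := Real.hasDerivAt_cos α
  have hsin := Real.hasDerivAt_sin α
  have hrot := (((((hcos.sub_const 1).mul_const (θ i)).sub (hsin.mul_const (θ j))).smul_const
    (EuclideanSpace.single i (1 : ℝ))).add
    (((hsin.mul_const (θ i)).add ((hcos.sub_const 1).mul_const (θ j))).smul_const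
    (EuclideanSpace.single j (1 : ℝ)))).const_add θ
  refine hrot.congr_deriv ?_
  simp only [rotationField, planeRotation, PiLp.add_apply, PiLp.smul_apply, smul_eq_mul,
    PiLp.single_apply, hij, hij.symm, if_true, if_false]
  module

theorem IsIsotropic.integral_fderiv_rotationField [IsFiniteMeasure σ] (hσ : IsIsotropic σ)
    (hij : i ≠ j) {F : Euc d → ℝ} (hF : ContDiff ℝ 1 F) :
    ∫ θ, fderiv ℝ F θ (rotationField i j θ) ∂σ = 0 := by
  let L (θ : Euc d) : ℝ := fderiv ℝ F θ (rotationField i j θ)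
  have hL : Continuous L := (hF.continuous_fderiv one_ne_zero).clm_apply (by fun_prop)
  have hrot (a : ℝ) : Continuous (planeRotation i j a) := (planeRotationEquiv hij a).continuous
  obtain ⟨B, hB⟩ :=
    (isCompact_closedBall (0 : Euc d) 1).exists_bound_of_continuousOn hL.continuousOn
  have hderiv := (hasDerivAt_integral_of_dominated_loc_of_deriv_le (μ := σ)
    (F := fun a θ => F (planeRotation i j a θ)) (F' := fun a θ => L (planeRotation i j a θ))
    (x₀ := (0 : ℝ)) (s := univ) (bound := fun _ => B) univ_mem
    (Eventually.of_forall fun a => (hF.continuous.comp (hrot a)).aestronglyMeasurable)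
    (integrable_of_continuous_of_ae_norm_le hσ.ae_norm_le_one (hF.continuous.comp (hrot 0)))
    (hL.comp (hrot 0)).aestronglyMeasurable
    (hσ.ae_norm_le_one.mono fun θ hθ a _ => hB _ <| mem_closedBall_zero_iff.2 <|
      (norm_planeRotation hij a θ).trans_le hθ)
    (integrable_const B)
    (Eventually.of_forall fun θ a _ => (hF.differentiable one_ne_zero _).hasFDerivAt.comp_hasDerivAt
      a (hasDerivAt_planeRotation hij a θ))).2
  have hconst (a : ℝ) : ∫ θ, F (planeRotation i j a θ) ∂σ = ∫ θ, F θ ∂σ := by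
    conv_rhs => rw [← hσ.map_eq (planeRotationEquiv hij a)]
    exact (integral_map (hrot a).aemeasurable hF.continuous.aestronglyMeasurable).symm
  simp only [hconst] at hderiv
  simpa only [planeRotation_zero] using hderiv.unique (hasDerivAt_const (0 : ℝ) _)

/-- A regularization of `D⁻¹` at the scale `δ`. -/
def smoothInv (δ D : ℝ) : ℝ := D / (D ^ 2 + δ ^ 2)

variable {δ : ℝ}

lemma smoothInv_neg (δ D : ℝ) : smoothInv δ (-D) = -smoothInv δ D := by
  simp [smoothInv, neg_div]

lemma smoothInv_mul_self (hδ : 0 < δ) (D : ℝ) :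
    smoothInv δ D * D = 1 - δ ^ 2 / (D ^ 2 + δ ^ 2) := by
  have : D ^ 2 + δ ^ 2 ≠ 0 := by positivity
  rw [smoothInv]
  field_simp
  ring

lemma contDiff_smoothInv (hδ : 0 < δ) : ContDiff ℝ 1 (smoothInv δ) :=
  contDiff_id.div (by fun_prop) fun D => by positivity

@[fun_prop]
lemma continuous_deriv_smoothInv (hδ : 0 < δ) : Continuous (deriv (smoothInv δ)) :=
  (contDiff_smoothInv hδ).continuous_deriv_one

lemma deriv_smoothInv (hδ : 0 < δ) (D : ℝ) :
    deriv (smoothInv δ) D = (δ ^ 2 - D ^ 2) / (D ^ 2 + δ ^ 2) ^ 2 := by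
  have hden : D ^ 2 + δ ^ 2 ≠ 0 := by positivity
  have hderiv := (hasDerivAt_id' D).fun_div ((hasDerivAt_pow 2 D).add_const (δ ^ 2)) hden
  rw [show smoothInv δ = fun D => D / (D ^ 2 + δ ^ 2) from rfl, hderiv.deriv]
  congr 1
  norm_num
  ring

lemma deriv_smoothInv_neg (hδ : 0 < δ) (D : ℝ) :
    deriv (smoothInv δ) (-D) = deriv (smoothInv δ) D := by
  simp only [deriv_smoothInv hδ, neg_sq]

lemma abs_deriv_smoothInv_le (hδ : 0 < δ) (D : ℝ) : |deriv (smoothInv δ) D| ≤ 1 / δ ^ 2 := by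
  have hpos : 0 < D ^ 2 + δ ^ 2 := by positivity
  have hnum : |δ ^ 2 - D ^ 2| ≤ D ^ 2 + δ ^ 2 := by
    rw [abs_le]
    constructor <;> nlinarith [sq_nonneg D, sq_nonneg δ]
  rw [deriv_smoothInv hδ, abs_div, abs_of_pos (pow_pos hpos 2)]
  calc |δ ^ 2 - D ^ 2| / (D ^ 2 + δ ^ 2) ^ 2 ≤ (D ^ 2 + δ ^ 2) / (D ^ 2 + δ ^ 2) ^ 2 := by gcongr
    _ = 1 / (D ^ 2 + δ ^ 2) := by field_simp
    _ ≤ 1 / δ ^ 2 := by gcongr; exact le_add_of_nonneg_left (sq_nonneg D)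

/-- The inner product of the projections of `θ` and `θ'` to the `(i, j)` coordinate plane. -/
def planeInner (i j : Fin d) (θ θ' : Euc d) : ℝ := θ i * θ' i + θ j * θ' j

@[fun_prop]
lemma continuous_planeInner (i j : Fin d) :
    Continuous fun p : Euc d × Euc d => planeInner i j p.1 p.2 := by
  unfold planeInner
  fun_prop

lemma planeArea_swap (i j : Fin d) (θ θ' : Euc d) : planeArea i j θ' θ = -planeArea i j θ θ' := by
  simp only [planeArea]
  ring

lemma planeInner_comm (i j : Fin d) (θ θ' : Euc d) :
    planeInner i j θ' θ = planeInner i j θ θ' := by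
  simp only [planeInner]
  ring

lemma hasFDerivAt_planeArea (i j : Fin d) (a θ : Euc d) :
    HasFDerivAt (fun θ => planeArea i j θ a)
      (a j • EuclideanSpace.proj i - a i • EuclideanSpace.proj j : Euc d →L[ℝ] ℝ) θ := by
  refine ((a j • EuclideanSpace.proj i - a i • EuclideanSpace.proj j :
    Euc d →L[ℝ] ℝ).hasFDerivAt).congr_of_eventuallyEq (Eventually.of_forall fun θ => ?_)
  simp [planeArea]
  ring

lemma IsIsotropic.integral_smoothInv_byParts [IsFiniteMeasure σ] (hσ : IsIsotropic σ) (hij : i ≠ j)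
    (hδ : 0 < δ) (a : Euc d) {G : Euc d → ℝ} (hG : ContDiff ℝ 1 G) :
    ∫ θ, (smoothInv δ (planeArea i j θ a) * fderiv ℝ G θ (rotationField i j θ)
      - deriv (smoothInv δ) (planeArea i j θ a) * planeInner i j θ a * G θ) ∂σ = 0 := by
  have hD : ContDiff ℝ 1 fun θ : Euc d => planeArea i j θ a := by
    unfold planeArea
    fun_prop
  rw [← hσ.integral_fderiv_rotationField hij (((contDiff_smoothInv hδ).comp hD).mul hG)]
  refine integral_congr_ae (Eventually.of_forall fun θ => ?_)
  have hW := ((contDiff_smoothInv hδ).differentiable one_ne_zero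
    (planeArea i j θ a)).hasDerivAt.comp_hasFDerivAt θ (hasFDerivAt_planeArea i j a θ)
  have hF : HasFDerivAt (fun x => smoothInv δ (planeArea i j x a) * G x) _ θ :=
    hW.mul (hG.differentiable one_ne_zero θ).hasFDerivAt
  have hvel : (a j • EuclideanSpace.proj i - a i • EuclideanSpace.proj j : Euc d →L[ℝ] ℝ)
      (rotationField i j θ) = -planeInner i j θ a := by
    simp [rotationField, planeInner, hij, hij.symm]
    ring
  simp only [Function.comp_apply, hF.fderiv, add_apply, smul_apply, smul_eq_mul, hvel]
  ring

/-- The `i`-th partial derivative; it is `0` at points where `H` is not differentiable. -/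
def partialDeriv (i : Fin d) (H : Euc d → ℝ) (x : Euc d) : ℝ :=
  fderiv ℝ H x (EuclideanSpace.single i (1 : ℝ))

lemma continuous_partialDeriv {H : Euc d → ℝ} (hH : ContDiff ℝ 1 H) (i : Fin d) :
    Continuous (partialDeriv i H) :=
  (hH.continuous_fderiv one_ne_zero).clm_apply continuous_const

lemma fderiv_rotationField (H : Euc d → ℝ) (x θ : Euc d) :
    fderiv ℝ H x (rotationField i j θ) =
      -θ j * partialDeriv i H x + θ i * partialDeriv j H x := by
  simp [rotationField, partialDeriv]

variable {H : Euc d → ℝ} [IsFiniteMeasure σ]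

lemma IsIsotropic.integral_prod_byParts_left (hσ : IsIsotropic σ) (hij : i ≠ j) (hδ : 0 < δ)
    (hH : ContDiff ℝ 1 H) (x : Euc d) :
    ∫ p, p.2 i * (smoothInv δ (planeArea i j p.1 p.2)
        * fderiv ℝ H (x + (p.1 - p.2)) (rotationField i j p.1)
      - deriv (smoothInv δ) (planeArea i j p.1 p.2) * planeInner i j p.1 p.2
        * H (x + (p.1 - p.2))) ∂σ.prod σ = 0 := by
  have hW := (contDiff_smoothInv hδ).continuous
  have hHc := hH.continuous
  rw [integral_prod_symm _ (integrable_of_continuous_of_ae_norm_le hσ.ae_prod_norm_le_one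
    (by fun_prop))]
  refine integral_eq_zero_of_ae (Eventually.of_forall fun θ' => ?_)
  have hG : ContDiff ℝ 1 fun θ => H (x + (θ - θ')) := hH.comp (by fun_prop)
  have hfG (θ : Euc d) : fderiv ℝ (fun θ => H (x + (θ - θ'))) θ = fderiv ℝ H (x + (θ - θ')) := by
    simp_rw [← add_sub_assoc, add_sub_right_comm x _ θ']
    exact fderiv_comp_add_left (x - θ')
  simpa only [integral_const_mul, hfG, Pi.zero_apply, mul_zero] using
    congrArg (θ' i * ·) (hσ.integral_smoothInv_byParts hij hδ θ' hG)

lemma IsIsotropic.integral_prod_byParts_right (hσ : IsIsotropic σ) (hij : i ≠ j) (hδ : 0 < δ)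
    (hH : ContDiff ℝ 1 H) (x : Euc d) :
    ∫ p, p.1 i * (smoothInv δ (planeArea i j p.1 p.2)
        * fderiv ℝ H (x + (p.1 - p.2)) (rotationField i j p.2)
      - deriv (smoothInv δ) (planeArea i j p.1 p.2) * planeInner i j p.1 p.2
        * H (x + (p.1 - p.2))) ∂σ.prod σ = 0 := by
  have hW := (contDiff_smoothInv hδ).continuous
  have hHc := hH.continuous
  rw [integral_prod _ (integrable_of_continuous_of_ae_norm_le hσ.ae_prod_norm_le_one
    (by fun_prop))]
  refine integral_eq_zero_of_ae (Eventually.of_forall fun θ => ?_)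
  have hG : ContDiff ℝ 1 fun θ' => H (x + (θ - θ')) := hH.comp (by fun_prop)
  have hfG (θ' : Euc d) : fderiv ℝ (fun θ' => H (x + (θ - θ'))) θ' =
      -fderiv ℝ H (x + (θ - θ')) := by
    have hshift := ((hasFDerivAt_id (𝕜 := ℝ) θ').const_sub θ).const_add x
    exact ((hH.differentiable one_ne_zero _).hasFDerivAt.comp θ' hshift).fderiv.trans (by simp)
  have hzero := congrArg (θ i * ·) (hσ.integral_smoothInv_byParts hij hδ θ hG)
  simpa only [integral_const_mul, hfG, Pi.zero_apply, mul_zero, planeArea_swap i j θ,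
    planeInner_comm i j θ, smoothInv_neg, deriv_smoothInv_neg hδ, neg_mul_neg,
    neg_apply] using hzero

/-- The tangential derivatives of `H (x + (θ - θ'))` along the rotation fields in `θ` and in `θ'`
determine its `i`-th derivative as soon as `planeArea i j θ θ' ≠ 0`. Dividing by this area in the
regularized way of `smoothInv` and integrating by parts removes the derivative from `H`. -/
lemma IsIsotropic.integral_smoothInv_mul_partialDeriv (hσ : IsIsotropic σ) (hij : i ≠ j)
    (hδ : 0 < δ) (hH : ContDiff ℝ 1 H) (x : Euc d) :
    ∫ p, smoothInv δ (planeArea i j p.1 p.2) * planeArea i j p.1 p.2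
        * partialDeriv i H (x + (p.1 - p.2)) ∂σ.prod σ =
      ∫ p, deriv (smoothInv δ) (planeArea i j p.1 p.2) * planeInner i j p.1 p.2
        * (p.2 i - p.1 i) * H (x + (p.1 - p.2)) ∂σ.prod σ := by
  have hW := (contDiff_smoothInv hδ).continuous
  have hpd := continuous_partialDeriv hH i
  have hHc := hH.continuous
  have hint {f : Euc d × Euc d → ℝ} (hf : Continuous f) : Integrable f (σ.prod σ) :=
    integrable_of_continuous_of_ae_norm_le hσ.ae_prod_norm_le_one hf
  have hdiff := (integral_sub (hint (by fun_prop)) (hint (by fun_prop))).trans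
    (congrArg₂ (· - ·) (hσ.integral_prod_byParts_left hij hδ hH x)
      (hσ.integral_prod_byParts_right hij hδ hH x))
  rw [← sub_eq_zero, ← integral_sub (hint (by fun_prop)) (hint (by fun_prop))]
  refine (integral_congr_ae (Eventually.of_forall fun p => ?_)).trans (hdiff.trans (sub_zero 0))
  simp only [fderiv_rotationField, planeArea]
  ring

lemma abs_planeInner_mul_sub_le {p : Euc d × Euc d} (hp : ‖p‖ ≤ 1) (i j : Fin d) :
    |planeInner i j p.1 p.2 * (p.2 i - p.1 i)| ≤ 4 := by
  have h₁ (k : Fin d) : |p.1 k| ≤ 1 := (PiLp.norm_apply_le p.1 k).trans ((norm_fst_le p).trans hp)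
  have h₂ (k : Fin d) : |p.2 k| ≤ 1 := (PiLp.norm_apply_le p.2 k).trans ((norm_snd_le p).trans hp)
  have hmul (k : Fin d) : |p.1 k * p.2 k| ≤ 1 := by
    rw [abs_mul]
    exact mul_le_one₀ (h₁ k) (abs_nonneg _) (h₂ k)
  have hinner : |planeInner i j p.1 p.2| ≤ 2 :=
    (abs_add_le _ _).trans (by linarith [hmul i, hmul j])
  have hsub : |p.2 i - p.1 i| ≤ 2 := (abs_sub _ _).trans (by linarith [h₁ i, h₂ i])
  rw [abs_mul]
  nlinarith [abs_nonneg (planeInner i j p.1 p.2), abs_nonneg (p.2 i - p.1 i)]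

theorem IsIsotropic.abs_integral_partialDeriv_le (hσ : IsIsotropic σ) (hij : i ≠ j) (hδ : 0 < δ)
    (hH : ContDiff ℝ 1 H) {A A' : ℝ} (hA : ∀ x, |H x| ≤ A) (hA' : ∀ x, |partialDeriv i H x| ≤ A')
    (x : Euc d) :
    |∫ p, partialDeriv i H (x + (p.1 - p.2)) ∂σ.prod σ| ≤
      4 * A / δ ^ 2 * (σ.prod σ).real univ
        + A' * ∫ p, δ ^ 2 / (planeArea i j p.1 p.2 ^ 2 + δ ^ 2) ∂σ.prod σ := by
  have hW := (contDiff_smoothInv hδ).continuous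
  have hpd := continuous_partialDeriv hH i
  have hcut : Continuous fun p : Euc d × Euc d => δ ^ 2 / (planeArea i j p.1 p.2 ^ 2 + δ ^ 2) :=
    continuous_const.div (by fun_prop) fun p => by positivity
  have hint {f : Euc d × Euc d → ℝ} (hf : Continuous f) : Integrable f (σ.prod σ) :=
    integrable_of_continuous_of_ae_norm_le hσ.ae_prod_norm_le_one hf
  have hsplit (p : Euc d × Euc d) : partialDeriv i H (x + (p.1 - p.2)) =
      smoothInv δ (planeArea i j p.1 p.2) * planeArea i j p.1 p.2
        * partialDeriv i H (x + (p.1 - p.2))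
      + δ ^ 2 / (planeArea i j p.1 p.2 ^ 2 + δ ^ 2) * partialDeriv i H (x + (p.1 - p.2)) := by
    rw [smoothInv_mul_self hδ]
    ring
  rw [integral_congr_ae (Eventually.of_forall hsplit),
    integral_add (hint (by fun_prop)) (hint (by fun_prop)),
    hσ.integral_smoothInv_mul_partialDeriv hij hδ hH]
  refine (abs_add_le _ _).trans (add_le_add ?_ ?_)
  · rw [← Real.norm_eq_abs]
    refine norm_integral_le_of_norm_le_const (hσ.ae_prod_norm_le_one.mono fun p hp => ?_)
    rw [mul_assoc (deriv _ _), norm_mul, norm_mul, Real.norm_eq_abs, Real.norm_eq_abs,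
      Real.norm_eq_abs]
    calc _ ≤ 1 / δ ^ 2 * 4 * A := by
          gcongr
          · exact abs_deriv_smoothInv_le hδ _
          · exact abs_planeInner_mul_sub_le hp i j
          · exact hA _
      _ = 4 * A / δ ^ 2 := by ring
  · rw [← integral_const_mul, ← Real.norm_eq_abs]
    refine norm_integral_le_of_norm_le ((hint hcut).const_mul A') (Eventually.of_forall fun p => ?_)
    rw [norm_mul, mul_comm, Real.norm_eq_abs, Real.norm_of_nonneg (by positivity)]
    gcongr
    exact hA' _

end SphericalByParts

section ShiftMean

variable {V : Type*} [NormedAddCommGroup V] {R A R' A' : ℝ} {f g : V → ℝ}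

/-- A continuous function bounded by `A` and vanishing outside the closed ball of radius `R`. -/
structure IsTame (R A : ℝ) (f : V → ℝ) : Prop where
  continuous : Continuous f
  abs_le : ∀ x, |f x| ≤ A
  eq_zero : ∀ x, R < ‖x‖ → f x = 0

lemma IsTame.bound_nonneg (hf : IsTame R A f) : 0 ≤ A := (abs_nonneg _).trans (hf.abs_le 0)

lemma IsTame.abs_mul_le (hf : IsTame R A f) (hg : IsTame R' A' g) (x y : V) :
    |f x * g y| ≤ A * A' := by
  rw [abs_mul]
  exact mul_le_mul (hf.abs_le x) (hg.abs_le y) (abs_nonneg _) hf.bound_nonneg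

lemma IsTame.mul (hf : IsTame R A f) (hg : IsTame R' A' g) :
    IsTame R (A * A') fun x => f x * g x where
  continuous := hf.continuous.mul hg.continuous
  abs_le x := hf.abs_mul_le hg x x
  eq_zero x hx := by rw [hf.eq_zero x hx, zero_mul]

variable [MeasurableSpace V] {μ σ : Measure V}

lemma IsTame.setIntegral_closedBall (hf : IsTame R A f) :
    ∫ x in closedBall 0 R, f x ∂μ = ∫ x, f x ∂μ :=
  setIntegral_eq_integral_of_forall_compl_eq_zero fun x hx => hf.eq_zero x (by simpa using hx)

lemma IsTame.abs_integral_le [ProperSpace V] [IsFiniteMeasureOnCompacts μ]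
    (hf : IsTame R A f) :
    |∫ x, f x ∂μ| ≤ A * μ.real (closedBall 0 R) := by
  rw [← hf.setIntegral_closedBall, ← Real.norm_eq_abs]
  exact norm_setIntegral_le_of_norm_le_const (isCompact_closedBall 0 R).measure_lt_top
    fun x _ => hf.abs_le x

variable [BorelSpace V]

lemma IsTame.integrable_comp_add [IsFiniteMeasure σ] (hf : IsTame R A f) (x : V) :
    Integrable (fun θ => f (x + θ)) σ :=
  Integrable.of_bound (hf.continuous.comp (by fun_prop)).aestronglyMeasurable A
    (Eventually.of_forall fun _ => hf.abs_le _)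

/-- The average of the translates of `f` by a measure `σ`, i.e. the convolution of `f` with the
reflection of `σ`. -/
def shiftMean (σ : Measure V) (f : V → ℝ) (x : V) : ℝ := ∫ θ, f (x + θ) ∂σ

lemma IsTame.shiftMean [IsFiniteMeasure σ] (hf : IsTame R A f) (hσ : ∀ᵐ θ ∂σ, ‖θ‖ ≤ 1) :
    IsTame (R + 1) (A * σ.real univ) (shiftMean σ f) where
  continuous := continuous_of_dominated
    (fun x => (hf.integrable_comp_add x).aestronglyMeasurable)
    (fun x => Eventually.of_forall fun θ => hf.abs_le (x + θ)) (integrable_const A)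
    (Eventually.of_forall fun θ => hf.continuous.comp (by fun_prop))
  abs_le x := by
    rw [← Real.norm_eq_abs]
    exact norm_integral_le_of_norm_le_const (Eventually.of_forall fun θ => hf.abs_le (x + θ))
  eq_zero x hx := integral_eq_zero_of_ae <| hσ.mono fun θ hθ => hf.eq_zero _ <| by
    linarith [norm_le_add_norm_add x θ]

/-- A family `F τ`, `τ ∈ s`, of uniformly tame functions with derivative `F' τ` in `τ`, the
derivatives being uniformly tame as well. -/
structure IsTameFamily (R A : ℝ) (s : Set ℝ) (F F' : ℝ → V → ℝ) : Prop where
  isTame : ∀ τ ∈ s, IsTame R A (F τ)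
  isTame_deriv : ∀ τ ∈ s, IsTame R A (F' τ)
  hasDerivAt : ∀ τ ∈ s, ∀ x, HasDerivAt (F · x) (F' τ x) τ

variable {s : Set ℝ} {F F' G G' : ℝ → V → ℝ}

lemma IsTameFamily.shiftMean [IsFiniteMeasure σ] (hF : IsTameFamily R A s F F') (hs : IsOpen s)
    (hσ : ∀ᵐ θ ∂σ, ‖θ‖ ≤ 1) :
    IsTameFamily (R + 1) (A * σ.real univ) s (fun τ => shiftMean σ (F τ))
      (fun τ => shiftMean σ (F' τ)) where
  isTame τ hτ := (hF.isTame τ hτ).shiftMean hσ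
  isTame_deriv τ hτ := (hF.isTame_deriv τ hτ).shiftMean hσ
  hasDerivAt τ hτ x := by
    have hmeas : ∀ᶠ τ in 𝓝 τ, AEStronglyMeasurable (fun θ => F τ (x + θ)) σ :=
      (hs.eventually_mem hτ).mono fun τ hτ =>
        ((hF.isTame τ hτ).integrable_comp_add x).aestronglyMeasurable
    exact (hasDerivAt_integral_of_dominated_loc_of_deriv_le (hs.mem_nhds hτ) hmeas
      ((hF.isTame τ hτ).integrable_comp_add x)
      ((hF.isTame_deriv τ hτ).integrable_comp_add x).aestronglyMeasurable
      (Eventually.of_forall fun θ τ hτ => (hF.isTame_deriv τ hτ).abs_le (x + θ))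
      (integrable_const A) (Eventually.of_forall fun θ τ hτ => hF.hasDerivAt τ hτ (x + θ))).2

variable [ProperSpace V]

lemma IsTame.integrable [IsFiniteMeasureOnCompacts μ] (hf : IsTame R A f) : Integrable f μ :=
  hf.continuous.integrable_of_hasCompactSupport <|
    HasCompactSupport.intro (isCompact_closedBall 0 R) fun x hx =>
      hf.eq_zero x (by simpa using hx)

lemma shiftMean_shiftMean [IsFiniteMeasure σ] [σ.IsNegInvariant] (hf : IsTame R A f) (x : V) :
    shiftMean σ (shiftMean σ f) x = ∫ p, f (x + (p.1 - p.2)) ∂σ.prod σ := by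
  have hint : Integrable (fun p : V × V => f (x + (p.1 - p.2))) (σ.prod σ) :=
    Integrable.of_bound (hf.continuous.comp (by fun_prop)).aestronglyMeasurable A
      (Eventually.of_forall fun _ => hf.abs_le _)
  rw [integral_prod _ hint]
  refine integral_congr_ae (Eventually.of_forall fun θ => ?_)
  simp only [shiftMean]
  rw [← integral_neg_eq_self]
  simp only [sub_eq_add_neg, add_assoc]

section Adjoint

variable [IsFiniteMeasure σ] [IsFiniteMeasureOnCompacts μ]

lemma IsTame.integrable_mul_comp (hf : IsTame R A f) (hg : IsTame R' A' g) {u : V × V → V}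
    (hu : Continuous u) : Integrable (fun p : V × V => f p.1 * g (u p)) (μ.prod σ) := by
  have hf' : Integrable (fun p : V × V => f p.1) (μ.prod σ) := hf.integrable.comp_fst σ
  exact hf'.mul_bdd (hg.continuous.comp hu).aestronglyMeasurable
    (Eventually.of_forall fun _ => hg.abs_le _)

lemma integral_mul_shiftMean_comm [μ.IsAddRightInvariant] [σ.IsNegInvariant]
    (hf : IsTame R A f) (hg : IsTame R' A' g) :
    ∫ x, f x * shiftMean σ g x ∂μ = ∫ x, g x * shiftMean σ f x ∂μ := by
  calc ∫ x, f x * shiftMean σ g x ∂μ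
      = ∫ x, ∫ θ, f x * g (x + θ) ∂σ ∂μ := by simp only [shiftMean, integral_const_mul]
    _ = ∫ θ, ∫ x, f x * g (x + θ) ∂μ ∂σ :=
        integral_integral_swap (hf.integrable_mul_comp hg (by fun_prop))
    _ = ∫ θ, ∫ y, g y * f (y - θ) ∂μ ∂σ := by
        congr with θ
        rw [← integral_add_right_eq_self (fun y => g y * f (y - θ)) θ]
        simp only [add_sub_cancel_right, mul_comm]
    _ = ∫ y, ∫ θ, g y * f (y - θ) ∂σ ∂μ :=
        (integral_integral_swap (hg.integrable_mul_comp hf (by fun_prop))).symm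
    _ = ∫ y, g y * shiftMean σ f y ∂μ := by
        congr with y
        rw [integral_const_mul, ← integral_neg_eq_self]
        simp only [sub_neg_eq_add, shiftMean]

lemma integral_shiftMean_mul_self_le [μ.IsAddRightInvariant] [σ.IsNegInvariant]
    (hσ : ∀ᵐ θ ∂σ, ‖θ‖ ≤ 1) (hf : IsTame R A f) {κ : ℝ}
    (hκ : ∀ x, |shiftMean σ (shiftMean σ f) x| ≤ κ) :
    ∫ x, shiftMean σ f x * shiftMean σ f x ∂μ ≤ A * κ * μ.real (closedBall 0 R) := by
  have htame : IsTame R (A * κ) fun x => f x * shiftMean σ (shiftMean σ f) x :=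
    { hf.mul ((hf.shiftMean hσ).shiftMean hσ) with
      abs_le := fun x => by
        rw [abs_mul]
        exact mul_le_mul (hf.abs_le x) (hκ x) (abs_nonneg _) hf.bound_nonneg }
  rw [integral_mul_shiftMean_comm (hf.shiftMean hσ) hf]
  exact (le_abs_self _).trans htame.abs_integral_le

lemma abs_le_add_mul_self_div {l : ℝ} (hl : 0 < l) (a : ℝ) : |a| ≤ l + a * a / l := by
  rw [← abs_mul_abs_self a, ← mul_le_mul_iff_of_pos_right hl, add_mul, div_mul_cancel₀ _ hl.ne']
  nlinarith [sq_nonneg (l - |a|)]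

/-- The `TT*` argument: the size of `shiftMean σ f` in mean square is governed by the second iterate
`shiftMean σ (shiftMean σ f)`. -/
theorem abs_integral_mul_shiftMean_le [μ.IsAddRightInvariant] [σ.IsNegInvariant]
    (hσ : ∀ᵐ θ ∂σ, ‖θ‖ ≤ 1) (hf : IsTame R A f) (hg : IsTame R' A' g) {κ l : ℝ}
    (hκ : ∀ x, |shiftMean σ (shiftMean σ f) x| ≤ κ) (hl : 0 < l) :
    |∫ x, f x * shiftMean σ g x ∂μ| ≤ A' * μ.real (closedBall 0 (R + 1)) * (l + A * κ / l) := by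
  have hA := hf.bound_nonneg
  have hA' := hg.bound_nonneg
  have hκ0 : 0 ≤ κ := (abs_nonneg _).trans (hκ 0)
  have hmean := hf.shiftMean hσ
  have hsq := hmean.mul hmean
  have hball : μ (closedBall 0 (R + 1)) ≠ ∞ := (isCompact_closedBall 0 _).measure_lt_top.ne
  have hconst : Integrable (fun _ => l) (μ.restrict (closedBall 0 (R + 1))) :=
    integrableOn_const hball
  have hsq' := hsq.integrable.integrableOn.div_const l (μ := μ.restrict (closedBall 0 (R + 1)))
  have hpointwise (x : V) : ‖g x * shiftMean σ f x‖ ≤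
      A' * (l + shiftMean σ f x * shiftMean σ f x / l) := by
    rw [norm_mul]
    exact mul_le_mul (hg.abs_le x) (abs_le_add_mul_self_div hl _) (norm_nonneg _) hA'
  have hprod : IsTame (R + 1) (A * σ.real univ * A') fun x => g x * shiftMean σ f x := by
    simpa only [mul_comm (g _)] using hmean.mul hg
  rw [integral_mul_shiftMean_comm hf hg, ← hprod.setIntegral_closedBall, ← Real.norm_eq_abs]
  calc ‖∫ x in closedBall 0 (R + 1), g x * shiftMean σ f x ∂μ‖
      ≤ ∫ x in closedBall 0 (R + 1), A' * (l + shiftMean σ f x * shiftMean σ f x / l) ∂μ :=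
        norm_integral_le_of_norm_le ((hconst.add hsq').const_mul A')
          (Eventually.of_forall hpointwise)
    _ = A' * (l * μ.real (closedBall 0 (R + 1)) +
          (∫ x, shiftMean σ f x * shiftMean σ f x ∂μ) / l) := by
        rw [integral_const_mul, integral_add hconst hsq', integral_div,
          hsq.setIntegral_closedBall, setIntegral_const, smul_eq_mul, mul_comm l]
    _ ≤ A' * (l * μ.real (closedBall 0 (R + 1)) +
          A * κ * μ.real (closedBall 0 (R + 1)) / l) := by
        gcongr
        refine (integral_shiftMean_mul_self_le hσ hf hκ).trans ?_
        gcongr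
        linarith
    _ = A' * μ.real (closedBall 0 (R + 1)) * (l + A * κ / l) := by ring

end Adjoint

lemma IsTameFamily.hasDerivAt_integral_mul [IsFiniteMeasureOnCompacts μ]
    (hF : IsTameFamily R A s F F') (hG : IsTameFamily R' A' s G G') (hs : IsOpen s) {τ : ℝ}
    (hτ : τ ∈ s) :
    HasDerivAt (fun τ => ∫ x, F τ x * G τ x ∂μ)
      (∫ x, F' τ x * G τ x ∂μ + ∫ x, F τ x * G' τ x ∂μ) τ := by
  have hFG (τ) (hτ : τ ∈ s) := (hF.isTame τ hτ).mul (hG.isTame τ hτ)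
  have hF'G (τ) (hτ : τ ∈ s) := (hF.isTame_deriv τ hτ).mul (hG.isTame τ hτ)
  have hFG' (τ) (hτ : τ ∈ s) := (hF.isTame τ hτ).mul (hG.isTame_deriv τ hτ)
  let bound : V → ℝ := (closedBall 0 R).indicator fun _ => 2 * (A * A')
  have hbound (x : V) (τ) (hτ : τ ∈ s) : ‖F' τ x * G τ x + F τ x * G' τ x‖ ≤ bound x := by
    by_cases hx : x ∈ closedBall (0 : V) R
    · simp only [bound, indicator_of_mem hx, two_mul]
      exact (norm_add_le _ _).trans (add_le_add ((hF'G τ hτ).abs_le x) ((hFG' τ hτ).abs_le x))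
    · have hRx : R < ‖x‖ := by simpa using hx
      simp [bound, indicator_of_notMem hx, (hF'G τ hτ).eq_zero x hRx, (hFG' τ hτ).eq_zero x hRx]
  rw [← integral_add (hF'G τ hτ).integrable (hFG' τ hτ).integrable]
  exact (hasDerivAt_integral_of_dominated_loc_of_deriv_le (hs.mem_nhds hτ)
    ((hs.eventually_mem hτ).mono fun τ hτ => (hFG τ hτ).integrable.aestronglyMeasurable)
    (hFG τ hτ).integrable
    ((hF'G τ hτ).integrable.add (hFG' τ hτ).integrable).aestronglyMeasurable
    (Eventually.of_forall hbound)
    ((integrable_indicator_iff measurableSet_closedBall).2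
      (integrableOn_const (isCompact_closedBall 0 R).measure_lt_top.ne))
    (Eventually.of_forall fun x τ hτ => (hF.hasDerivAt τ hτ x).mul (hG.hasDerivAt τ hτ x))).2

lemma hasDerivAt_integral_mul_shiftMean [IsFiniteMeasure σ] [σ.IsNegInvariant]
    [μ.IsAddRightInvariant] [IsFiniteMeasureOnCompacts μ] (hσ : ∀ᵐ θ ∂σ, ‖θ‖ ≤ 1)
    (hF : IsTameFamily R A s F F') (hG : IsTameFamily R' A' s G G') (hs : IsOpen s) {τ : ℝ}
    (hτ : τ ∈ s) :
    HasDerivAt (fun τ => ∫ x, F τ x * shiftMean σ (G τ) x ∂μ)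
      (∫ x, F' τ x * shiftMean σ (G τ) x ∂μ + ∫ x, G' τ x * shiftMean σ (F τ) x ∂μ) τ := by
  rw [← integral_mul_shiftMean_comm (hF.isTame τ hτ) (hG.isTame_deriv τ hτ)]
  exact hF.hasDerivAt_integral_mul (hG.shiftMean hs hσ) hs hτ

end ShiftMean

section Kernels

variable {V : Type*} [NormedAddCommGroup V] {R A B : ℝ} {f : V → ℝ}

lemma IsTame.mono (hf : IsTame R A f) (hAB : A ≤ B) : IsTame R B f :=
  { hf with abs_le := fun x => (hf.abs_le x).trans hAB }

lemma IsTame.const_mul (hf : IsTame R A f) (c : ℝ) : IsTame R (|c| * A) fun x => c * f x where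
  continuous := hf.continuous.const_mul c
  abs_le x := by
    rw [abs_mul]
    exact mul_le_mul_of_nonneg_left (hf.abs_le x) (abs_nonneg c)
  eq_zero x hx := by rw [hf.eq_zero x hx, mul_zero]

lemma isTame_sum {ι : Type*} [Fintype ι] {f : ι → V → ℝ} (hf : ∀ i, IsTame R A (f i)) :
    IsTame R (Fintype.card ι * A) fun x => ∑ i, f i x where
  continuous := continuous_finsetSum _ fun i _ => (hf i).continuous
  abs_le x := by
    refine (Finset.abs_sum_le_sum_abs _ _).trans ?_
    simpa using Finset.sum_le_card_nsmul Finset.univ _ A fun i _ => (hf i).abs_le x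
  eq_zero x hx := Finset.sum_eq_zero fun i _ => (hf i).eq_zero x hx

lemma exists_forall_isTame [ProperSpace V] {ι : Type*} [Finite ι] {f : ι → V → ℝ}
    (hf : ∀ i, Continuous (f i)) (hf0 : ∀ i x, R < ‖x‖ → f i x = 0) :
    ∃ B, ∀ i, IsTame R B (f i) := by
  have hbound (i) : ∃ b, ∀ x, |f i x| ≤ b :=
    (hf i).bounded_above_of_compact_support <|
      HasCompactSupport.intro (isCompact_closedBall 0 R) fun x hx => hf0 i x (by simpa using hx)
  choose b hb using hbound
  obtain ⟨B, hB⟩ := Finite.exists_le b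
  exact ⟨B, fun i => ⟨hf i, fun x => (hb i x).trans (hB i), hf0 i⟩⟩

end Kernels

section Mollify

variable {d N : ℕ} {s r B τ : ℝ} {S : Finset (Euc d)} {w : Euc d → ℝ} {k : Euc d → ℝ}

lemma partialDeriv_eq_zero (hk : ∀ x, r < ‖x‖ → k x = 0) (i : Fin d) {x : Euc d}
    (hx : r < ‖x‖) : partialDeriv i k x = 0 := by
  have hzero : k =ᶠ[𝓝 x] fun _ => 0 :=
    ((isOpen_lt continuous_const continuous_norm).eventually_mem hx).mono hk
  simp [partialDeriv, hzero.fderiv_eq]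

lemma fderiv_apply_self_eq_sum (k : Euc d → ℝ) (y : Euc d) :
    fderiv ℝ k y y = ∑ i, y i * partialDeriv i k y := by
  have hy : y = ∑ i, y i • EuclideanSpace.single i (1 : ℝ) := by
    ext j
    simp [Pi.single_apply]
  conv_lhs => rw [hy, map_sum, ← hy]
  simp [partialDeriv]

/-- The density at scale `τ` of the discrete measure `∑ p ∈ S, w p • δ_p`: its convolution with the
rescaled kernel `τ⁻ᵈ k (· / τ)`. -/
def mollify (S : Finset (Euc d)) (w k : Euc d → ℝ) (τ : ℝ) (x : Euc d) : ℝ :=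
  ∑ p ∈ S, w p * (τ⁻¹ ^ d * k (τ⁻¹ • (x - p)))

lemma contDiff_mollify {n : WithTop ℕ∞} (hk : ContDiff ℝ n k) :
    ContDiff ℝ n (mollify S w k τ) :=
  ContDiff.sum fun p _ => contDiff_const.mul (contDiff_const.mul (hk.comp (by fun_prop)))

lemma IsTame.apply_inv_smul_eq_zero (hk : IsTame r B k) (hr : r < 1) (hτ : 0 < τ)
    {y : Euc d} (hy : τ ≤ ‖y‖) : k (τ⁻¹ • y) = 0 := by
  refine hk.eq_zero _ (hr.trans_le ?_)
  rwa [norm_smul, norm_inv, Real.norm_of_nonneg hτ.le, inv_mul_eq_div, one_le_div hτ]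

lemma IsTame.abs_inv_pow_mul_le (hk : IsTame r B k) (hτ : 0 < τ) (y : Euc d) :
    |τ⁻¹ ^ d * k y| ≤ τ⁻¹ ^ d * B := by
  rw [abs_mul, abs_of_nonneg (by positivity : 0 ≤ τ⁻¹ ^ d)]
  gcongr
  exact hk.abs_le y

lemma IsTame.abs_mollify_le_sum (hk : IsTame r B k) {a : ℝ} (ha : 0 < a) (haτ : a ≤ τ)
    (x : Euc d) : |mollify S w k τ x| ≤ (∑ p ∈ S, |w p|) * (a⁻¹ ^ d * B) := by
  have hB := hk.bound_nonneg
  have hτ : 0 < τ := ha.trans_le haτ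
  rw [mollify, Finset.sum_mul]
  refine (Finset.abs_sum_le_sum_abs _ _).trans (Finset.sum_le_sum fun p _ => ?_)
  rw [abs_mul]
  gcongr
  refine (hk.abs_inv_pow_mul_le hτ _).trans ?_
  gcongr

/-- A Frostman weight of dimension `s` down to scale `2⁻ᴺ` on the dyadic cells, carried by points of
the unit cube. -/
structure IsCubeFrostmanWeight (s : ℝ) (N : ℕ) (S : Finset (Euc d)) (w : Euc d → ℝ) : Prop
    extends IsFrostmanWeight cell ((2 : ℝ) ^ (-s)) N S w where
  subset_unitCube : ↑S ⊆ unitCube d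

lemma IsCubeFrostmanWeight.abs_mollify_le (h : IsCubeFrostmanWeight s N S w) (hs0 : 0 ≤ s)
    (hsd : s ≤ d) (hτN : (1 / 2) ^ N ≤ τ) (hτ1 : τ ≤ 1)
    (hk : IsTame r B k) (hr : r < 1) (x : Euc d) :
    |mollify S w k τ x| ≤ B * 6 ^ d * τ ^ (s - d) := by
  have hτ : 0 < τ := lt_of_lt_of_le (by positivity) hτN
  have hB := hk.bound_nonneg
  have hlocal : |mollify S w k τ x| ≤ ∑ p ∈ S with ‖x - p‖ < τ, w p * (τ⁻¹ ^ d * B) := by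
    rw [mollify, Finset.sum_filter]
    refine (Finset.abs_sum_le_sum_abs _ _).trans (Finset.sum_le_sum fun p _ => ?_)
    split_ifs with hp
    · rw [abs_mul, abs_of_nonneg (h.nonneg p)]
      exact mul_le_mul_of_nonneg_left (hk.abs_inv_pow_mul_le hτ _) (h.nonneg p)
    · simp [hk.apply_inv_smul_eq_zero hr hτ (not_lt.1 hp)]
  calc |mollify S w k τ x| ≤ (∑ p ∈ S with ‖x - p‖ < τ, w p) * (τ⁻¹ ^ d * B) := by
        rwa [Finset.sum_mul]
    _ ≤ 6 ^ d * τ ^ s * (τ⁻¹ ^ d * B) := by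
        gcongr
        exact h.sum_ball_le h.subset_unitCube hs0 hsd hτN hτ1 x
    _ = B * 6 ^ d * τ ^ (s - d) := by
        rw [Real.rpow_sub hτ, Real.rpow_natCast, inv_pow]
        ring

lemma IsTame.mollify (hk : IsTame r B k) (hr : r < 1) (hS : ↑S ⊆ unitCube d) (hτ : 0 < τ)
    (hτ1 : τ ≤ 1) {A : ℝ} (hA : ∀ x, |mollify S w k τ x| ≤ A) :
    IsTame (d + 1) A (mollify S w k τ) where
  continuous := (contDiff_mollify (n := 0) (contDiff_zero.2 hk.continuous)).continuous
  abs_le := hA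
  eq_zero x hx := Finset.sum_eq_zero fun p hp => by
    have hxp : τ ≤ ‖x - p‖ := by
      linarith [norm_sub_norm_le x p, norm_le_of_mem_unitCube (hS hp)]
    rw [hk.apply_inv_smul_eq_zero hr hτ hxp, mul_zero, mul_zero]

lemma partialDeriv_mollify (hk : Differentiable ℝ k) (i : Fin d) (x : Euc d) :
    partialDeriv i (mollify S w k τ) x = τ⁻¹ * mollify S w (partialDeriv i k) τ x := by
  have hterm (p : Euc d) : HasFDerivAt (fun x => w p * (τ⁻¹ ^ d * k (τ⁻¹ • (x - p))))
      (w p • τ⁻¹ ^ d • (fderiv ℝ k (τ⁻¹ • (x - p))).comp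
        (τ⁻¹ • ContinuousLinearMap.id ℝ (Euc d))) x :=
    (((hk _).hasFDerivAt.comp x
      (((hasFDerivAt_id x).sub_const p).const_smul τ⁻¹)).const_mul _).const_mul _
  have hsum : fderiv ℝ (mollify S w k τ) x = _ :=
    (HasFDerivAt.fun_sum fun p (_ : p ∈ S) => hterm p).fderiv
  rw [partialDeriv, hsum, _root_.sum_apply, mollify, Finset.mul_sum]
  refine Finset.sum_congr rfl fun p _ => ?_
  simp only [partialDeriv, smul_apply, ContinuousLinearMap.comp_apply,
    ContinuousLinearMap.id_apply, map_smul, smul_eq_mul]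
  ring

/-- The components of the vector field `-y φ(y)`. Its divergence drives the change of scale:
`∂_τ (τ⁻ᵈ φ(x / τ)) = ∑ i, ∂ᵢ (τ⁻ᵈ fluxKernel φ i (x / τ))`. -/
def fluxKernel (φ : Euc d → ℝ) (i : Fin d) (y : Euc d) : ℝ := -(y i * φ y)

variable {φ : Euc d → ℝ}

lemma contDiff_fluxKernel (hφ : ContDiff ℝ 1 φ) (i : Fin d) : ContDiff ℝ 1 (fluxKernel φ i) :=
  ((contDiff_euclidean.1 contDiff_id i).mul hφ).neg

lemma partialDeriv_fluxKernel (hφ : Differentiable ℝ φ) (i : Fin d) (y : Euc d) :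
    partialDeriv i (fluxKernel φ i) y = -(φ y + y i * partialDeriv i φ y) := by
  have hcoord : HasFDerivAt (fun y : Euc d => y i) (EuclideanSpace.proj i : Euc d →L[ℝ] ℝ) y :=
    (EuclideanSpace.proj i : Euc d →L[ℝ] ℝ).hasFDerivAt
  have hflux : fderiv ℝ (fluxKernel φ i) y = _ := (hcoord.mul (hφ y).hasFDerivAt).neg.fderiv
  rw [partialDeriv, hflux]
  simp [partialDeriv]
  ring

lemma hasDerivAt_inv_pow_mul (hd : 0 < d) (hφ : Differentiable ℝ φ) (hτ : 0 < τ) (y : Euc d) :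
    HasDerivAt (fun τ : ℝ => τ⁻¹ ^ d * φ (τ⁻¹ • y))
      (τ⁻¹ * (τ⁻¹ ^ d * ∑ i, partialDeriv i (fluxKernel φ i) (τ⁻¹ • y))) τ := by
  have hinv := hasDerivAt_inv hτ.ne'
  have hcomp := (hφ (τ⁻¹ • y)).hasFDerivAt.comp_hasDerivAt τ (hinv.smul_const y)
  refine ((hinv.pow d).mul hcomp).congr_deriv ?_
  have hradial : (-(τ ^ 2)⁻¹) • y = (-τ⁻¹) • (τ⁻¹ • y) := by
    rw [smul_smul]
    congr 1
    field_simp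
  rw [hradial, map_smul, fderiv_apply_self_eq_sum]
  simp only [partialDeriv_fluxKernel hφ, Finset.sum_neg_distrib, Finset.sum_add_distrib,
    Finset.sum_const, Finset.card_univ, Fintype.card_fin]
  obtain ⟨n, rfl⟩ := Nat.exists_eq_succ_of_ne_zero hd.ne'
  simp only [smul_eq_mul, nsmul_eq_mul, Nat.succ_eq_add_one, Nat.add_sub_cancel,
    Function.comp_apply, Pi.pow_apply, ← inv_pow]
  ring

/-- The derivative of `mollify S w φ τ` in the scale `τ`, in divergence form. -/
def scaleDrift (S : Finset (Euc d)) (w φ : Euc d → ℝ) (τ : ℝ) (x : Euc d) : ℝ :=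
  ∑ i, partialDeriv i (mollify S w (fluxKernel φ i) τ) x

lemma hasDerivAt_mollify (hd : 0 < d) (hφ : ContDiff ℝ 1 φ) (hτ : 0 < τ) (x : Euc d) :
    HasDerivAt (mollify S w φ · x) (scaleDrift S w φ τ x) τ := by
  have hterm (p : Euc d) := (hasDerivAt_inv_pow_mul hd (hφ.differentiable one_ne_zero) hτ
    (x - p)).const_mul (w p)
  refine (HasDerivAt.fun_sum fun p (_ : p ∈ S) => hterm p).congr_deriv ?_
  simp only [scaleDrift, fun i => partialDeriv_mollify (S := S) (w := w) (τ := τ)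
    ((contDiff_fluxKernel hφ i).differentiable one_ne_zero) i x, mollify, Finset.mul_sum]
  rw [Finset.sum_comm]
  refine Finset.sum_congr rfl fun i _ => Finset.sum_congr rfl fun p _ => ?_
  ring

/-- `φ` is a `C¹` kernel of size `B`, supported strictly inside the unit ball: `B` bounds `φ`, its
fluxes, and their divergence. -/
structure IsScaleKernel (B : ℝ) (φ : Euc d → ℝ) : Prop where
  contDiff : ContDiff ℝ 1 φ
  isTame : IsTame (3 / 4) B φ
  isTame_flux : ∀ i, IsTame (3 / 4) B (fluxKernel φ i)
  isTame_partialDeriv_flux : ∀ i, IsTame (3 / 4) B (partialDeriv i (fluxKernel φ i))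

lemma exists_isScaleKernel (hφ : ContDiff ℝ 1 φ) (hφ0 : ∀ x, 3 / 4 < ‖x‖ → φ x = 0) :
    ∃ B, IsScaleKernel B φ := by
  have hflux0 (i : Fin d) (x) (hx : 3 / 4 < ‖x‖) : fluxKernel φ i x = 0 := by
    simp [fluxKernel, hφ0 x hx]
  obtain ⟨B₀, h₀⟩ := exists_forall_isTame (f := fun _ : Unit => φ) (fun _ => hφ.continuous)
    fun _ => hφ0
  obtain ⟨B₁, h₁⟩ := exists_forall_isTame (fun i => (contDiff_fluxKernel hφ i).continuous) hflux0
  obtain ⟨B₂, h₂⟩ := exists_forall_isTame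
    (fun i => continuous_partialDeriv (contDiff_fluxKernel hφ i) i)
    fun i x hx => partialDeriv_eq_zero (hflux0 i) i hx
  exact ⟨max B₀ (max B₁ B₂), hφ, (h₀ ()).mono (by simp), fun i => (h₁ i).mono (by simp),
    fun i => (h₂ i).mono (by simp)⟩

lemma IsScaleKernel.exists_isTameFamily_mollify (hφ : IsScaleKernel B φ) (hd : 0 < d)
    (hS : ↑S ⊆ unitCube d) {a : ℝ} (ha : 0 < a) :
    ∃ A, IsTameFamily (d + 1) A (Ioo a 1) (mollify S w φ) (scaleDrift S w φ) := by
  have hB := hφ.isTame.bound_nonneg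
  let A := (∑ p ∈ S, |w p|) * (a⁻¹ ^ d * B)
  have hA : 0 ≤ A := by positivity
  have htame {k : Euc d → ℝ} (hk : IsTame (3 / 4) B k) {τ} (hτ : τ ∈ Ioo a 1) :
      IsTame (d + 1) A (mollify S w k τ) :=
    hk.mollify (by norm_num) hS (ha.trans hτ.1) hτ.2.le (hk.abs_mollify_le_sum ha hτ.1.le)
  refine ⟨A + Fintype.card (Fin d) * (a⁻¹ * A), fun τ hτ => ?_, fun τ hτ => isTame_sum (A :=
    a⁻¹ * A) (fun i => ?_) |>.mono (le_add_of_nonneg_left hA), fun τ hτ x =>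
    hasDerivAt_mollify hd hφ.contDiff (ha.trans hτ.1) x⟩
  · exact (htame hφ.isTame hτ).mono (le_add_of_nonneg_right (by positivity))
  · rw [funext (partialDeriv_mollify
      ((contDiff_fluxKernel hφ.contDiff i).differentiable one_ne_zero) i)]
    refine ((htame (hφ.isTame_partialDeriv_flux i) hτ).const_mul τ⁻¹).mono ?_
    rw [abs_of_pos (inv_pos.2 (ha.trans hτ.1))]
    gcongr
    exact hτ.1.le

end Mollify

section Drift

variable {d : ℕ} {σ : Measure (Euc d)} {i j : Fin d} {C : ℝ}

lemma IsIsotropic.isNegInvariant (hσ : IsIsotropic σ) : σ.IsNegInvariant :=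
  ⟨hσ.map_eq (LinearIsometryEquiv.neg ℝ)⟩

lemma HasSlabBound.mono (hσ : HasSlabBound σ C) {C' : ℝ} (hCC' : C ≤ C') : HasSlabBound σ C' :=
  fun e he l hl => (hσ e he l hl).trans (ENNReal.ofReal_le_ofReal (by gcongr))

variable [IsFiniteMeasure σ] {C₀ P : ℝ} {H G : Euc d → ℝ}

lemma IsIsotropic.abs_shiftMean_shiftMean_partialDeriv_le (hσ : IsIsotropic σ)
    (hslab : HasSlabBound σ C) (hC : 0 ≤ C) (hij : i ≠ j) (hC₀ : 0 ≤ C₀) (hP : 1 ≤ P)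
    (hH : ContDiff ℝ 1 H) (hHle : ∀ x, |H x| ≤ C₀ * P) {R : ℝ}
    (hH' : IsTame R (C₀ * P ^ 43) (partialDeriv i H)) (x : Euc d) :
    |shiftMean σ (shiftMean σ (partialDeriv i H)) x| ≤
      C₀ * (5 * σ.real univ ^ 2 + 2 * C * σ.real univ) * P ^ 37 := by
  have hP0 : 0 < P := one_pos.trans_le hP
  have hmass : (σ.prod σ).real univ = σ.real univ ^ 2 := by
    rw [← univ_prod_univ, measureReal_prod_prod, sq]
  have := hσ.isNegInvariant
  rw [shiftMean_shiftMean hH']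
  -- Cutting off at `δ = P⁻¹⁸` balances the two terms: `P / δ² = P³⁷` and `P⁴³ δ^(1/3) = P³⁷`.
  refine (hσ.abs_integral_partialDeriv_le hij (δ := (P⁻¹ ^ 6) ^ 3) (by positivity) hH hHle
    hH'.abs_le x).trans ?_
  have hsmall := hslab.integral_sq_div_planeArea_sq_add_sq_le hC hij (q := P⁻¹ ^ 6)
    (by positivity) (pow_le_one₀ (inv_pos.2 hP0).le (inv_le_one_of_one_le₀ hP))
  calc _ ≤ 4 * (C₀ * P) / ((P⁻¹ ^ 6) ^ 3) ^ 2 * (σ.prod σ).real univ + C₀ * P ^ 43 *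
          ((2 * C * σ.real univ + (σ.prod σ).real univ) * P⁻¹ ^ 6) := by gcongr
    _ = _ := by
        rw [hmass]
        field_simp
        ring

/-- The constant in the bound for the correlation of a partial derivative with a density: `m` is the
mass and `C` the slab constant of the shifting measure, `C₀` bounds the densities, and `v` is the
volume of a ball containing their supports. -/
def driftConst (m C C₀ v : ℝ) : ℝ := C₀ * v * (1 + C₀ ^ 2 * (5 * m ^ 2 + 2 * C * m))

lemma IsIsotropic.abs_integral_partialDeriv_mul_shiftMean_le (hσ : IsIsotropic σ)
    (hslab : HasSlabBound σ C) (hC : 0 ≤ C) (hij : i ≠ j) (hP : 1 ≤ P)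
    (hH : ContDiff ℝ 1 H) (hHle : ∀ x, |H x| ≤ C₀ * P) {R R' : ℝ}
    (hH' : IsTame R (C₀ * P ^ 43) (partialDeriv i H)) (hG : IsTame R' (C₀ * P) G) :
    |∫ x, partialDeriv i H x * shiftMean σ G x| ≤
      driftConst (σ.real univ) C C₀ (volume.real (closedBall (0 : Euc d) (R + 1))) * P ^ 41 := by
  have hP0 : 0 < P := one_pos.trans_le hP
  have hC₀ : 0 ≤ C₀ := nonneg_of_mul_nonneg_left hG.bound_nonneg hP0
  have := hσ.isNegInvariant
  refine (abs_integral_mul_shiftMean_le hσ.ae_norm_le_one hH' hG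
    (hσ.abs_shiftMean_shiftMean_partialDeriv_le hslab hC hij hC₀ hP hH hHle hH')
    (pow_pos hP0 40)).trans_eq ?_
  rw [driftConst]
  field_simp

end Drift

section Correlation

variable {d N : ℕ} {s τ B C : ℝ} {S S' : Finset (Euc d)} {w w' φ : Euc d → ℝ}
  {σ : Measure (Euc d)}

lemma IsCubeFrostmanWeight.isTame_mollify (h : IsCubeFrostmanWeight s N S w) (hd : 0 < d)
    (hs : d - 1 / 42 ≤ s) (hsd : s ≤ d) (hτN : (1 / 2) ^ N ≤ τ) (hτ1 : τ ≤ 1)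
    {k : Euc d → ℝ} (hk : IsTame (3 / 4) B k) :
    IsTame (d + 1) (B * 6 ^ d * τ ^ (-1 / 42 : ℝ)) (mollify S w k τ) := by
  have hτ : 0 < τ := lt_of_lt_of_le (by positivity) hτN
  have hd1 : (1 : ℝ) ≤ d := by exact_mod_cast hd
  have hB := hk.bound_nonneg
  refine hk.mollify (by norm_num) h.subset_unitCube hτ hτ1 fun x =>
    (h.abs_mollify_le (by linarith) hsd hτN hτ1 hk (by norm_num) x).trans ?_
  gcongr ?_ * ?_
  exact Real.rpow_le_rpow_of_exponent_ge hτ hτ1 (by linarith)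

lemma rpow_neg_one_div_pow (hτ : 0 < τ) (m n : ℕ) :
    (τ ^ (-1 / m : ℝ)) ^ n = τ ^ (-(n / m) : ℝ) := by
  rw [← Real.rpow_natCast, ← Real.rpow_mul hτ.le]
  congr 1
  ring

lemma IsCubeFrostmanWeight.isTame_partialDeriv_mollify (h : IsCubeFrostmanWeight s N S w)
    (hφ : IsScaleKernel B φ) (hd : 0 < d) (hs : d - 1 / 42 ≤ s) (hsd : s ≤ d)
    (hτN : (1 / 2) ^ N ≤ τ) (hτ1 : τ ≤ 1) (i : Fin d) :
    IsTame (d + 1) (B * 6 ^ d * (τ ^ (-1 / 42 : ℝ)) ^ 43)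
      (partialDeriv i (mollify S w (fluxKernel φ i) τ)) := by
  have hτ : 0 < τ := lt_of_lt_of_le (by positivity) hτN
  rw [funext (partialDeriv_mollify
    ((contDiff_fluxKernel hφ.contDiff i).differentiable one_ne_zero) i)]
  refine ((h.isTame_mollify hd hs hsd hτN hτ1 (hφ.isTame_partialDeriv_flux i)).const_mul
    τ⁻¹).mono (le_of_eq ?_)
  have hinv : (τ ^ (-1 / 42 : ℝ)) ^ 42 = τ⁻¹ := by
    rw [← Real.rpow_neg_one, ← Nat.cast_ofNat (n := 42), rpow_neg_one_div_pow hτ]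
    norm_num
  rw [abs_of_pos (inv_pos.2 hτ), ← hinv]
  ring

variable [IsFiniteMeasure σ]

lemma IsIsotropic.abs_integral_scaleDrift_mul_shiftMean_le (hσ : IsIsotropic σ)
    (hslab : HasSlabBound σ C) (hC : 0 ≤ C) (hd : 2 ≤ d) (hφ : IsScaleKernel B φ)
    (h : IsCubeFrostmanWeight s N S w) (h' : IsCubeFrostmanWeight s N S' w')
    (hs : d - 1 / 42 ≤ s) (hsd : s ≤ d) (hτN : (1 / 2) ^ N ≤ τ) (hτ1 : τ ≤ 1) :
    |∫ x, scaleDrift S w φ τ x * shiftMean σ (mollify S' w' φ τ) x| ≤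
      d * driftConst (σ.real univ) C (B * 6 ^ d)
        (volume.real (closedBall (0 : Euc d) (d + 1 + 1))) * τ ^ (1 / 42 - 1 : ℝ) := by
  have hτ : 0 < τ := lt_of_lt_of_le (by positivity) hτN
  have hd0 : 0 < d := by lia
  have : Nontrivial (Fin d) := Fin.nontrivial_iff_two_le.2 hd
  have hpow : (τ ^ (-1 / 42 : ℝ)) ^ 41 = τ ^ (1 / 42 - 1 : ℝ) := by
    rw [← Nat.cast_ofNat (n := 42), rpow_neg_one_div_pow hτ]
    norm_num
  have hP : 1 ≤ τ ^ (-1 / 42 : ℝ) :=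
    Real.one_le_rpow_of_pos_of_le_one_of_nonpos hτ hτ1 (by norm_num)
  have hG := h'.isTame_mollify hd0 hs hsd hτN hτ1 hφ.isTame
  have hH' := h.isTame_partialDeriv_mollify hφ hd0 hs hsd hτN hτ1
  choose j hj using fun i : Fin d => exists_ne i
  have hpartial (i : Fin d) :=
    hσ.abs_integral_partialDeriv_mul_shiftMean_le hslab hC (hj i).symm hP
      (contDiff_mollify (contDiff_fluxKernel hφ.contDiff i))
      (h.isTame_mollify hd0 hs hsd hτN hτ1 (hφ.isTame_flux i)).abs_le (hH' i) hG
  simp only [scaleDrift, Finset.sum_mul]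
  rw [integral_finsetSum _ fun i _ => ((hH' i).mul (hG.shiftMean hσ.ae_norm_le_one)).integrable]
  refine (Finset.abs_sum_le_sum_abs _ _).trans ?_
  refine (Finset.sum_le_card_nsmul _ _ _ fun i _ => hpartial i).trans_eq ?_
  rw [hpow, Finset.card_univ, Fintype.card_fin, nsmul_eq_mul, mul_assoc]

lemma sub_le_of_deriv_le_rpow {J J' : ℝ → ℝ} {a b α K : ℝ} (ha : 0 < a) (hab : a ≤ b)
    (hα : 0 < α) (hK : 0 ≤ K) (hJ : ∀ τ ∈ Icc a b, HasDerivAt J (J' τ) τ)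
    (hJ' : ∀ τ ∈ Icc a b, J' τ ≤ K * τ ^ (α - 1)) : J b - K / α * b ^ α ≤ J a := by
  have hder (τ) (hτ : τ ∈ Icc a b) : HasDerivAt (fun τ => J τ - K / α * τ ^ α)
      (J' τ - K / α * (α * τ ^ (α - 1))) τ :=
    (hJ τ hτ).sub ((Real.hasDerivAt_rpow_const (Or.inl (ha.trans_le hτ.1).ne')).const_mul _)
  have hanti : AntitoneOn (fun τ => J τ - K / α * τ ^ α) (Icc a b) := by
    refine antitoneOn_of_deriv_nonpos (convex_Icc a b)
      (fun τ hτ => (hder τ hτ).continuousAt.continuousWithinAt)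
      (fun τ hτ => (hder τ (interior_subset hτ)).differentiableAt.differentiableWithinAt)
      fun τ hτ => ?_
    rw [(hder τ (interior_subset hτ)).deriv, ← mul_assoc, div_mul_cancel₀ _ hα.ne']
    linarith [hJ' τ (interior_subset hτ)]
  refine (hanti (left_mem_Icc.2 hab) (right_mem_Icc.2 hab) hab).trans (sub_le_self _ ?_)
  positivity

theorem IsIsotropic.correlation_sub_le (hσ : IsIsotropic σ)
    (hslab : HasSlabBound σ C) (hC : 0 ≤ C) (hd : 2 ≤ d) (hφ : IsScaleKernel B φ)
    (h : IsCubeFrostmanWeight s N S w) (h' : IsCubeFrostmanWeight s N S' w')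
    (hs : d - 1 / 42 ≤ s) (hsd : s ≤ d) (hτN : (1 / 2) ^ N ≤ τ) (hτ1 : τ < 1) :
    (∫ x, mollify S w φ τ x * shiftMean σ (mollify S' w' φ τ) x) -
        84 * d * driftConst (σ.real univ) C (B * 6 ^ d)
          (volume.real (closedBall (0 : Euc d) (d + 1 + 1))) * τ ^ (1 / 42 : ℝ) ≤
      ∫ x, mollify S w φ ((1 / 2) ^ N) x * shiftMean σ (mollify S' w' φ ((1 / 2) ^ N)) x := by
  have hd0 : 0 < d := by lia
  have ha : 0 < (1 / 2 : ℝ) ^ N / 2 := by positivity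
  obtain ⟨A, hF⟩ := hφ.exists_isTameFamily_mollify (w := w) hd0 h.subset_unitCube ha
  obtain ⟨A', hF'⟩ := hφ.exists_isTameFamily_mollify (w := w') hd0 h'.subset_unitCube ha
  have := hσ.isNegInvariant
  have hder (u) (hu : u ∈ Icc ((1 / 2 : ℝ) ^ N) τ) := hasDerivAt_integral_mul_shiftMean
    (μ := volume) hσ.ae_norm_le_one hF hF' isOpen_Ioo (τ := u)
    ⟨by linarith [hu.1], hu.2.trans_lt hτ1⟩
  have hB := hφ.isTame.bound_nonneg
  set K := driftConst (σ.real univ) C (B * 6 ^ d)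
    (volume.real (closedBall (0 : Euc d) (d + 1 + 1))) with hK
  have hK0 : 0 ≤ K := by
    rw [hK, driftConst]
    positivity
  have hmono := sub_le_of_deriv_le_rpow (K := 2 * d * K) (α := 1 / 42) (by positivity) hτN
    (by norm_num) (by positivity) hder fun u hu => by
      have h₁ := (le_abs_self _).trans (hσ.abs_integral_scaleDrift_mul_shiftMean_le hslab hC hd hφ
        h h' hs hsd hu.1 (hu.2.trans hτ1.le))
      have h₂ := (le_abs_self _).trans (hσ.abs_integral_scaleDrift_mul_shiftMean_le hslab hC hd hφ
        h' h hs hsd hu.1 (hu.2.trans hτ1.le))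
      linarith
  convert hmono using 3
  ring

end Correlation

section CoarseScale

variable {d k N : ℕ} {s : ℝ} {S : Finset (Euc d)} {w φ : Euc d → ℝ}

lemma mollify_nonneg (hw : ∀ x, 0 ≤ w x) (hφ0 : ∀ y, 0 ≤ φ y) {τ : ℝ} (hτ : 0 ≤ τ) (x : Euc d) :
    0 ≤ mollify S w φ τ x :=
  Finset.sum_nonneg fun p _ => mul_nonneg (hw p) (mul_nonneg (by positivity) (hφ0 _))

lemma IsCubeFrostmanWeight.mul_sum_cell_le_mollify (h : IsCubeFrostmanWeight s N S w) (hd : 0 < d)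
    (hφ0 : ∀ y, 0 ≤ φ y) (hφ1 : ∀ y, ‖y‖ ≤ 1 / 2 → φ y = 1) {x : Euc d} (hx : x ∈ unitCube d) :
    (2 * d * (1 / 2) ^ k : ℝ)⁻¹ ^ d * ∑ p ∈ S with cell k p = cell k x, w p ≤
      mollify S w φ (2 * d * (1 / 2) ^ k) x := by
  have hd' : (0 : ℝ) < d := by exact_mod_cast hd
  set τ : ℝ := 2 * d * (1 / 2) ^ k with hτ
  have hτ0 : 0 < τ := mul_pos (mul_pos two_pos hd') (by positivity)
  calc τ⁻¹ ^ d * ∑ p ∈ S with cell k p = cell k x, w p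
      = ∑ p ∈ S with cell k p = cell k x, w p * (τ⁻¹ ^ d * φ (τ⁻¹ • (x - p))) := by
        rw [Finset.mul_sum]
        refine Finset.sum_congr rfl fun p hp => ?_
        obtain ⟨hpS, hpx⟩ := Finset.mem_filter.1 hp
        have hdist := norm_sub_le_of_cell_eq hx (h.subset_unitCube hpS) hpx.symm
        rw [hφ1, mul_one, mul_comm]
        rw [norm_smul, norm_inv, Real.norm_of_nonneg hτ0.le, inv_mul_le_iff₀ hτ0, hτ]
        linarith
    _ ≤ mollify S w φ τ x :=
        Finset.sum_le_sum_of_subset_of_nonneg (Finset.filter_subset _ _) fun p _ _ =>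
          mul_nonneg (h.nonneg p) (mul_nonneg (by positivity) (hφ0 _))

lemma IsCubeFrostmanWeight.le_mollify (h : IsCubeFrostmanWeight s N S w) (hd : 0 < d)
    (hφ0 : ∀ y, 0 ≤ φ y) (hφ1 : ∀ y, ‖y‖ ≤ 1 / 2 → φ y = 1) (hk : k ≤ N)
    (hgap : ((2 ^ k) ^ d - 1) * ((2 : ℝ) ^ (-s)) ^ k ≤ 1 - 3 / 4 * ((1 / 2) ^ k) ^ d)
    (hmass : 1 - ((1 / 2) ^ k) ^ d / 4 ≤ ∑ p ∈ S, w p) {x : Euc d} (hx : x ∈ unitCube d) :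
    (2 * d : ℝ)⁻¹ ^ d / 2 ≤ mollify S w φ (2 * d * (1 / 2) ^ k) x := by
  have hcell := h.sum_sub_le_sum_cell hk (cell_mem_cellIndices (d := d) k) x
  rw [card_cellIndices] at hcell
  push_cast at hcell
  have hhalf : ((1 / 2 : ℝ) ^ k) ^ d / 2 ≤ ∑ p ∈ S with cell k p = cell k x, w p := by linarith
  refine le_trans ?_ (h.mul_sum_cell_le_mollify hd hφ0 hφ1 hx)
  calc (2 * d : ℝ)⁻¹ ^ d / 2
      = (2 * d * (1 / 2) ^ k : ℝ)⁻¹ ^ d * (((1 / 2) ^ k) ^ d / 2) := by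
        rw [mul_inv (2 * d : ℝ), mul_pow (2 * d : ℝ)⁻¹, inv_pow ((1 / 2 : ℝ) ^ k)]
        field_simp
    _ ≤ _ := by gcongr

/-- The point `(1/2, …, 1/2)`. -/
def cubeCenter (d : ℕ) : Euc d := WithLp.toLp 2 fun _ => 1 / 2

lemma mem_unitCube_of_norm_sub_cubeCenter_le {x : Euc d} (hx : ‖x - cubeCenter d‖ ≤ 1 / 2) :
    x ∈ unitCube d := fun i => by
  have hcoord : |x i - 1 / 2| ≤ 1 / 2 := (PiLp.norm_apply_le (x - cubeCenter d) i).trans hx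
  constructor <;> linarith [abs_le.1 hcoord]

lemma mul_volume_le_integral_mul_shiftMean {σ : Measure (Euc d)} [IsFiniteMeasure σ]
    {R A A' c : ℝ} {f g : Euc d → ℝ} (hσ : ∀ᵐ θ ∂σ, ‖θ‖ ≤ 1 / 4)
    (hf : IsTame R A f) (hg : IsTame R A' g) (hf0 : ∀ x, 0 ≤ f x) (hg0 : ∀ x, 0 ≤ g x)
    (hc : 0 ≤ c) (hfc : ∀ x ∈ unitCube d, c ≤ f x) (hgc : ∀ x ∈ unitCube d, c ≤ g x) :
    c ^ 2 * σ.real univ * volume.real (ball (cubeCenter d) (1 / 4)) ≤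
      ∫ x, f x * shiftMean σ g x := by
  have hmean0 (x) : 0 ≤ shiftMean σ g x := integral_nonneg fun θ => hg0 _
  have hint : Integrable fun x => f x * shiftMean σ g x :=
    (hf.mul (hg.shiftMean (hσ.mono fun θ hθ => hθ.trans (by norm_num)))).integrable
  have hmean (x) (hx : x ∈ ball (cubeCenter d) (1 / 4)) : c * σ.real univ ≤ shiftMean σ g x := by
    rw [mul_comm, ← smul_eq_mul, ← integral_const]
    refine integral_mono_ae (integrable_const c) (hg.integrable_comp_add x) (hσ.mono fun θ hθ => ?_)
    refine hgc _ (mem_unitCube_of_norm_sub_cubeCenter_le ?_)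
    rw [mem_ball, dist_eq_norm] at hx
    rw [add_sub_right_comm]
    linarith [norm_add_le (x - cubeCenter d) θ]
  calc c ^ 2 * σ.real univ * volume.real (ball (cubeCenter d) (1 / 4))
      ≤ ∫ x in ball (cubeCenter d) (1 / 4), f x * shiftMean σ g x := by
        refine setIntegral_ge_of_const_le_real measurableSet_ball measure_ball_lt_top.ne
          (fun x hx => ?_) hint.integrableOn
        rw [sq, mul_assoc]
        refine mul_le_mul (hfc x (mem_unitCube_of_norm_sub_cubeCenter_le ?_)) (hmean x hx)
          (by positivity) (hf0 x)
        rw [mem_ball, dist_eq_norm] at hx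
        linarith
    _ ≤ ∫ x, f x * shiftMean σ g x :=
        setIntegral_le_integral hint (Eventually.of_forall fun x => mul_nonneg (hf0 x) (hmean0 x))

lemma IsCubeFrostmanWeight.mul_volume_le_correlation {σ : Measure (Euc d)} [IsFiniteMeasure σ]
    {B r : ℝ} {S' : Finset (Euc d)} {w' : Euc d → ℝ} (hσ : ∀ᵐ θ ∂σ, ‖θ‖ ≤ 1 / 4) (hd : 0 < d)
    (hφ : IsTame r B φ) (hr : r < 1) (hφ0 : ∀ y, 0 ≤ φ y) (hφ1 : ∀ y, ‖y‖ ≤ 1 / 2 → φ y = 1)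
    (h : IsCubeFrostmanWeight s N S w) (h' : IsCubeFrostmanWeight s N S' w') (hk : k ≤ N)
    (hτ1 : 2 * d * (1 / 2 : ℝ) ^ k ≤ 1)
    (hgap : ((2 ^ k) ^ d - 1) * ((2 : ℝ) ^ (-s)) ^ k ≤ 1 - 3 / 4 * ((1 / 2) ^ k) ^ d)
    (hmass : 1 - ((1 / 2) ^ k) ^ d / 4 ≤ ∑ p ∈ S, w p)
    (hmass' : 1 - ((1 / 2) ^ k) ^ d / 4 ≤ ∑ p ∈ S', w' p) :
    ((2 * d : ℝ)⁻¹ ^ d / 2) ^ 2 * σ.real univ * volume.real (ball (cubeCenter d) (1 / 4)) ≤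
      ∫ x, mollify S w φ (2 * d * (1 / 2) ^ k) x *
        shiftMean σ (mollify S' w' φ (2 * d * (1 / 2) ^ k)) x := by
  have hτ0 : 0 < 2 * d * (1 / 2 : ℝ) ^ k :=
    mul_pos (mul_pos two_pos (Nat.cast_pos.2 hd)) (by positivity)
  exact mul_volume_le_integral_mul_shiftMean hσ
    (hφ.mollify hr h.subset_unitCube hτ0 hτ1 (hφ.abs_mollify_le_sum hτ0 le_rfl))
    (hφ.mollify hr h'.subset_unitCube hτ0 hτ1 (hφ.abs_mollify_le_sum hτ0 le_rfl))
    (mollify_nonneg h.nonneg hφ0 hτ0.le) (mollify_nonneg h'.nonneg hφ0 hτ0.le) (by positivity)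
    (fun _ => h.le_mollify hd hφ0 hφ1 hk hgap hmass)
    (fun _ => h'.le_mollify hd hφ0 hφ1 hk hgap hmass')

end CoarseScale

section FineScale

variable {d N : ℕ} {S S' : Finset (Euc d)} {w w' k : Euc d → ℝ} {r B t τ : ℝ}

lemma exists_ne_zero_of_integral_mul_shiftMean_ne_zero {V : Type*} [NormedAddCommGroup V]
    [MeasurableSpace V] {μ σ : Measure V} {f g : V → ℝ} {p : V → Prop} (hσ : ∀ᵐ θ ∂σ, p θ)
    (h : ∫ x, f x * shiftMean σ g x ∂μ ≠ 0) : ∃ x θ, p θ ∧ f x ≠ 0 ∧ g (x + θ) ≠ 0 := by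
  contrapose! h
  refine integral_eq_zero_of_ae (Eventually.of_forall fun x => ?_)
  by_cases hx : f x = 0
  · simp [hx]
  · have hmean : shiftMean σ g x = 0 := integral_eq_zero_of_ae (hσ.mono fun θ hθ => h x θ hθ hx)
    simp [hmean]

lemma IsTame.exists_mem_norm_sub_lt (hk : IsTame r B k) (hr : r < 1) (hτ : 0 < τ) {x : Euc d}
    (h : DistanceSet.mollify S w k τ x ≠ 0) : ∃ p ∈ S, ‖x - p‖ < τ := by
  obtain ⟨p, hp, hne⟩ := Finset.exists_ne_zero_of_sum_ne_zero h
  refine ⟨p, hp, lt_of_not_ge fun hxp => hne ?_⟩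
  rw [hk.apply_inv_smul_eq_zero hr hτ hxp, mul_zero, mul_zero]

lemma exists_abs_dist_sub_le_of_correlation_ne_zero (hd : 0 < d) (ht : 0 ≤ t)
    (hk : IsTame r B k) (hr : r < 1) (hτ : 0 < τ)
    (h : ∫ x, mollify S w k τ x * shiftMean (sphereMeasure d t) (mollify S' w' k τ) x ≠ 0) :
    ∃ p ∈ S, ∃ p' ∈ S', |dist p p' - t| ≤ 2 * τ := by
  obtain ⟨x, θ, rfl, hx, hxθ⟩ :=
    exists_ne_zero_of_integral_mul_shiftMean_ne_zero (ae_norm_eq_sphereMeasure hd ht) h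
  obtain ⟨p, hp, hpx⟩ := hk.exists_mem_norm_sub_lt hr hτ hx
  obtain ⟨p', hp', hpx'⟩ := hk.exists_mem_norm_sub_lt hr hτ hxθ
  refine ⟨p, hp, p', hp', ?_⟩
  rw [dist_comm, dist_eq_norm]
  calc |‖p' - p‖ - ‖θ‖| ≤ ‖p' - p - θ‖ := abs_norm_sub_norm_le _ _
    _ = ‖(x - p) - (x + θ - p')‖ := by congr 1; abel
    _ ≤ 2 * τ := by linarith [norm_sub_le (x - p) (x + θ - p')]

end FineScale

section Constants

lemma exists_mul_rpow_lt (d : ℕ) (K : ℝ) {c α : ℝ} (hc : 0 < c) (hα : 0 < α) :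
    ∃ k : ℕ, 2 * d * (1 / 2 : ℝ) ^ k < 1 ∧ K * (2 * d * (1 / 2 : ℝ) ^ k) ^ α < c := by
  have hscale : Tendsto (fun k : ℕ => 2 * d * (1 / 2 : ℝ) ^ k) atTop (𝓝 0) := by
    simpa using (tendsto_pow_atTop_nhds_zero_of_lt_one (r := (1 / 2 : ℝ)) (by norm_num)
      (by norm_num)).const_mul (2 * d : ℝ)
  have herror : Tendsto (fun k : ℕ => K * (2 * d * (1 / 2 : ℝ) ^ k) ^ α) atTop (𝓝 0) := by
    simpa [Real.zero_rpow hα.ne'] using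
      (hscale.rpow_const (p := α) (Or.inr hα.le)).const_mul K
  exact ((hscale.eventually_lt_const one_pos).and (herror.eventually_lt_const hc)).exists

lemma exists_cell_weight_le (d k : ℕ) {ε₀ : ℝ} (hε₀ : 0 < ε₀) :
    ∃ ε > 0, ε ≤ ε₀ ∧
      ((2 ^ k) ^ d - 1) * ((2 : ℝ) ^ (-(d - ε) : ℝ)) ^ k ≤ 1 - 3 / 4 * ((1 / 2) ^ k) ^ d := by
  have hcont : Continuous fun ε : ℝ => ((2 ^ k) ^ d - 1) * ((2 : ℝ) ^ (-(d - ε) : ℝ)) ^ k := by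
    have : Continuous fun ε : ℝ => (2 : ℝ) ^ (-(d - ε) : ℝ) :=
      continuous_const.rpow (by fun_prop) fun _ => Or.inl two_ne_zero
    fun_prop
  have hzero : ((2 ^ k) ^ d - 1) * ((2 : ℝ) ^ (-(d - 0) : ℝ)) ^ k <
      1 - 3 / 4 * ((1 / 2) ^ k) ^ d := by
    have hpos : 0 < ((1 / 2 : ℝ) ^ k) ^ d := by positivity
    have hone : ((2 : ℝ) ^ k) ^ d * ((1 / 2) ^ k) ^ d = 1 := by simp
    rw [sub_zero, two_rpow_neg_pow, Real.rpow_natCast, sub_mul, hone]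
    linarith
  obtain ⟨r, hr, hball⟩ := Metric.eventually_nhds_iff.1
    (hcont.continuousAt.eventually_lt continuousAt_const hzero)
  refine ⟨min (r / 2) ε₀, by positivity, min_le_right _ _, (hball ?_).le⟩
  rw [dist_zero_right, Real.norm_of_nonneg (by positivity)]
  exact (min_le_left _ _).trans_lt (half_lt_self hr)

end Constants

/-- The kernel mollifying the discrete Frostman weights. -/
def cutoff (d : ℕ) : ContDiffBump (0 : Euc d) := ⟨1 / 2, 3 / 4, by norm_num, by norm_num⟩

lemma cutoff_eq_one {d : ℕ} {y : Euc d} (hy : ‖y‖ ≤ 1 / 2) : cutoff d y = 1 :=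
  (cutoff d).one_of_mem_closedBall (by simpa [cutoff] using hy)

lemma exists_isScaleKernel_cutoff (d : ℕ) : ∃ B, IsScaleKernel B (cutoff d) :=
  exists_isScaleKernel (cutoff d).contDiff fun _ hx =>
    (cutoff d).zero_of_le_dist (by simpa [cutoff] using hx.le)

theorem exists_forall_exists_abs_dist_sub_le {d : ℕ} (hd : 2 ≤ d) :
    ∃ k : ℕ, ∃ ρ > 0, ∃ ε > 0, ρ < 1 / 2 ∧ ε ≤ 1 / 42 ∧ ∀ N ≥ k,
      ∀ (S S' : Finset (Euc d)) (w w' : Euc d → ℝ),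
      IsCubeFrostmanWeight (d - ε) N S w → IsCubeFrostmanWeight (d - ε) N S' w' →
      1 - 2 * ρ ≤ ∑ p ∈ S, w p → 1 - 2 * ρ ≤ ∑ p ∈ S', w' p → ∀ t ∈ Icc (1 / 8 : ℝ) (1 / 4),
      ∃ p ∈ S, ∃ p' ∈ S', |dist p p' - t| ≤ 2 * (1 / 2) ^ N := by
  have hd0 : 0 < d := by lia
  obtain ⟨B, hφ⟩ := exists_isScaleKernel_cutoff d
  set m : ℝ := volume.real (ball (0 : Euc d) 1) with hm
  set K : ℝ := 84 * d * driftConst m (2 ^ d / (1 / 8)) (B * 6 ^ d)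
    (volume.real (closedBall (0 : Euc d) (d + 1 + 1)))
  have hcoarse :
      0 < ((2 * d : ℝ)⁻¹ ^ d / 2) ^ 2 * m * volume.real (ball (cubeCenter d) (1 / 4)) := by
    have hball (x : Euc d) {r : ℝ} (hr : 0 < r) : 0 < volume.real (ball x r) :=
      ENNReal.toReal_pos (measure_ball_pos _ x hr).ne' measure_ball_lt_top.ne
    exact mul_pos (mul_pos (by positivity) (hball 0 one_pos)) (hball _ (by norm_num))
  obtain ⟨k, hk1, hkK⟩ := exists_mul_rpow_lt d K hcoarse (α := 1 / 42) (by norm_num)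
  obtain ⟨ε, hε, hε42, hgap⟩ := exists_cell_weight_le d k (ε₀ := 1 / 42) (by norm_num)
  have hpow : ((1 / 2 : ℝ) ^ k) ^ d ≤ 1 :=
    pow_le_one₀ (by positivity) (pow_le_one₀ (by norm_num) (by norm_num))
  refine ⟨k, ((1 / 2) ^ k) ^ d / 8, by positivity, ε, hε, by linarith, hε42,
    fun N hN S S' w w' h h' hmass hmass' t ht => ?_⟩
  have ht0 : 0 < t := by linarith [ht.1]
  have hτN : (1 / 2 : ℝ) ^ N ≤ 2 * d * (1 / 2) ^ k := by
    refine (pow_le_pow_of_le_one (by norm_num) (by norm_num) hN).trans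
      (le_mul_of_one_le_left (by positivity) ?_)
    exact_mod_cast (by lia : 1 ≤ 2 * d)
  have hslab : HasSlabBound (sphereMeasure d t) (2 ^ d / (1 / 8)) :=
    (hasSlabBound_sphereMeasure ht0).mono (by gcongr; exact ht.1)
  have hlower := h.mul_volume_le_correlation
    ((ae_norm_eq_sphereMeasure hd0 ht0.le).mono fun _ hθ => hθ.le.trans ht.2) hd0 hφ.isTame
    (by norm_num) (fun _ => (cutoff d).nonneg) (fun _ => cutoff_eq_one) h' hN hk1.le hgap
    (by linarith) (by linarith)
  have hdrift := (isIsotropic_sphereMeasure hd0 ht0.le (by linarith [ht.2])).correlation_sub_le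
    hslab (by positivity) hd hφ h h' (by linarith) (by linarith) hτN hk1
  rw [sphereMeasure_real_univ, ← hm] at hlower hdrift
  exact exists_abs_dist_sub_le_of_correlation_ne_zero hd0 ht0.le hφ.isTame (by norm_num)
    (by positivity)
    ((sub_pos.2 hkK).trans_le ((sub_le_sub_right hlower _).trans hdrift)).ne'

section Souslin

lemma IsNested.exists_forall_lt_content_image {α β : Type*} {c : ℕ → α → β} (hc : IsNested c)
    (v L : ℝ≥0∞) (f : (ℕ → ℕ) → α) (h : L < content c v (range f)) :
    ∃ (M : ℕ → ℕ) (X : ℕ → Set (ℕ → ℕ)), (∀ N, L < content c v (f '' X N)) ∧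
      ∀ N, ∀ j < N, ∀ a ∈ X N, a j ≤ M j := by
  have step (X : {X : Set (ℕ → ℕ) // L < content c v (f '' X)}) (j : ℕ) :
      ∃ m : ℕ, L < content c v (f '' (X.1 ∩ {a | a j ≤ m})) := by
    have hmono : Monotone fun m => f '' (X.1 ∩ {a | a j ≤ m}) := fun m m' hm =>
      image_mono (inter_subset_inter_right _ fun a (ha : a j ≤ m) => ha.trans hm)
    have hUnion : ⋃ m, f '' (X.1 ∩ {a | a j ≤ m}) = f '' X.1 := by
      rw [← image_iUnion, ← inter_iUnion,
        inter_eq_left.2 fun a _ => mem_iUnion.2 ⟨a j, le_refl (a j)⟩]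
    exact lt_iSup_iff.1 (X.2.trans_le (hUnion ▸ hc.content_iUnion_le_iSup hmono))
  choose m hm using step
  let Y (N : ℕ) : {X : Set (ℕ → ℕ) // L < content c v (f '' X)} :=
    N.rec ⟨univ, by rwa [image_univ]⟩ fun j X => ⟨X.1 ∩ {a | a j ≤ m X j}, hm X j⟩
  have hanti : Antitone fun N => (Y N).1 := antitone_nat_of_succ_le fun _ => inter_subset_left
  exact ⟨fun j => m (Y j) j, fun N => (Y N).1, fun N => (Y N).2,
    fun N j hj a ha => (hanti (Nat.succ_le_of_lt hj) ha).2⟩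

lemma exists_isCompact_forall_mem {M : ℕ → ℕ} {a : ℕ → ℕ → ℕ} (h : ∀ N, ∀ j < N, a N j ≤ M j) :
    ∃ K, IsCompact K ∧ ∀ N, a N ∈ K := by
  refine ⟨univ.pi fun j => Iic (M j + ∑ N ∈ Finset.range (j + 1), a N j),
    isCompact_univ_pi fun j => (finite_Iic _).isCompact, fun N j _ => ?_⟩
  obtain hj | hj := lt_or_ge j N
  · exact (h N j hj).trans (Nat.le_add_right _ _)
  · exact (Finset.single_le_sum (f := fun N => a N j) (fun _ _ => Nat.zero_le _)
      (Finset.mem_range.2 (by lia))).trans (Nat.le_add_left _ _)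

variable {d : ℕ}

lemma exists_isCubeFrostmanWeight {s L : ℝ} (N : ℕ) {A : Set (Euc d)} (hA : A ⊆ unitCube d)
    (h : ENNReal.ofReal L < content cell (ENNReal.ofReal (2 ^ (-s))) A) :
    ∃ (S : Finset (Euc d)) (w : Euc d → ℝ),
      ↑S ⊆ A ∧ IsCubeFrostmanWeight s N S w ∧ L ≤ ∑ p ∈ S, w p := by
  obtain ⟨S, w, hSA, hw, hsum⟩ := isNested_cell.exists_isFrostmanWeight (r := (2 : ℝ) ^ (-s))
    (by positivity) (finite_cell_image N A)
  exact ⟨S, w, hSA, ⟨hw, hSA.trans hA⟩, (ENNReal.ofReal_lt_ofReal_iff'.1 (h.trans_le hsum)).1.le⟩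

lemma ofReal_lt_content_of_le_dyadicContent {s s₀ L L' : ℝ} (hs₀ : 0 < s₀) (hs : s₀ ≤ s)
    (hL' : 0 < L') (hL : L < L') {A : Set (Euc d)} (hA : A ⊆ unitCube d)
    (h : ENNReal.ofReal L' ≤ dyadicContent s A) :
    ENNReal.ofReal L < content cell (ENNReal.ofReal (2 ^ (-s₀))) A :=
  calc ENNReal.ofReal L < ENNReal.ofReal L' := (ENNReal.ofReal_lt_ofReal_iff hL').2 hL
    _ ≤ dyadicContent s A := h
    _ ≤ content cell (ENNReal.ofReal (2 ^ (-s))) A :=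
        dyadicContent_le_content (hs₀.trans_le hs) hA
    _ ≤ content cell (ENNReal.ofReal (2 ^ (-s₀))) A := content_mono_left (by gcongr; norm_num)

lemma exists_continuous_forall_exists_isCubeFrostmanWeight {s L : ℝ} {E : Set (Euc d)}
    (hE : AnalyticSet E) (hEc : E ⊆ unitCube d)
    (h : ENNReal.ofReal L < content cell (ENNReal.ofReal (2 ^ (-s))) E) :
    ∃ (f : (ℕ → ℕ) → Euc d) (M : ℕ → ℕ), Continuous f ∧ range f = E ∧
      ∀ n N, ∃ (S : Finset (Euc d)) (w : Euc d → ℝ), ↑S ⊆ f '' {a | ∀ j < n, a j ≤ M j} ∧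
        IsCubeFrostmanWeight s N S w ∧ L ≤ ∑ p ∈ S, w p := by
  rw [AnalyticSet] at hE
  obtain rfl | ⟨f, hf, rfl⟩ := hE
  · simp [content_empty] at h
  obtain ⟨M, X, hX, hM⟩ := isNested_cell.exists_forall_lt_content_image _ _ f h
  refine ⟨f, M, hf, rfl, fun n N => ?_⟩
  obtain ⟨S, w, hS, hw, hsum⟩ :=
    exists_isCubeFrostmanWeight N ((image_subset_range f (X n)).trans hEc) (hX n)
  exact ⟨S, w, hS.trans (image_mono fun a ha j hj => hM n j hj a ha), hw, hsum⟩

lemma exists_dist_eq_of_forall_abs_dist_sub_le {α : Type*} [PseudoMetricSpace α] {f g : (ℕ → ℕ) → α}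
    (hf : Continuous f) (hg : Continuous g) {M M' : ℕ → ℕ} {t : ℝ} {δ : ℕ → ℝ}
    (hδ : Tendsto δ atTop (𝓝 0))
    (h : ∀ n, ∃ a b, (∀ j < n, a j ≤ M j) ∧ (∀ j < n, b j ≤ M' j) ∧
      |dist (f a) (g b) - t| ≤ δ n) : ∃ a b, dist (f a) (g b) = t := by
  choose a b ha hb hab using h
  obtain ⟨K, hK, haK⟩ := exists_isCompact_forall_mem ha
  obtain ⟨K', hK', hbK'⟩ := exists_isCompact_forall_mem hb
  obtain ⟨z, -, ψ, hψ, hlim⟩ := (hK.prod hK').tendsto_subseq (x := fun n => (a n, b n))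
    fun n => ⟨haK n, hbK' n⟩
  have hcont : Continuous fun z : (ℕ → ℕ) × (ℕ → ℕ) => |dist (f z.1) (g z.2) - t| := by
    fun_prop
  have hle : |dist (f z.1) (g z.2) - t| ≤ 0 := le_of_tendsto_of_tendsto'
    ((hcont.tendsto z).comp hlim) (hδ.comp hψ.tendsto_atTop) fun n => hab (ψ n)
  exact ⟨z.1, z.2, sub_eq_zero.1 (abs_nonpos_iff.1 hle)⟩

lemma tendsto_two_mul_half_pow_add (k : ℕ) :
    Tendsto (fun n => 2 * (1 / 2 : ℝ) ^ (n + k)) atTop (𝓝 0) := by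
  simpa using ((tendsto_pow_atTop_nhds_zero_of_lt_one (r := (1 / 2 : ℝ)) (by norm_num)
    (by norm_num)).comp (tendsto_add_atTop_nat k)).const_mul 2

end Souslin

end DistanceSet

open DistanceSet in
theorem statement1_general (d : ℕ) (hd : 2 ≤ d) :
    ∃ ρ ε : ℝ, ρ ∈ Ioo (0 : ℝ) 1 ∧ ε ∈ Ioo (0 : ℝ) 1 ∧
      ∀ E F : Set (Euc d), AnalyticSet E → AnalyticSet F → E ⊆ unitCube d → F ⊆ unitCube d →
        ∀ s : ℝ, (d : ℝ) - ε ≤ s → ENNReal.ofReal (1 - ρ) ≤ dyadicContent s E →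
          ENNReal.ofReal (1 - ρ) ≤ dyadicContent s F → Icc (1 / 8 : ℝ) (1 / 4) ⊆ distSet E F := by
  obtain ⟨k, ρ, hρ, ε, hε, hρ2, hε42, hpair⟩ := exists_forall_exists_abs_dist_sub_le hd
  refine ⟨ρ, ε, ⟨hρ, by linarith⟩, ⟨hε, by linarith⟩,
    fun E F hE hF hEc hFc s hs hcE hcF t ht => ?_⟩
  have hd2 : (2 : ℝ) ≤ d := by exact_mod_cast hd
  have hcontent {A : Set (Euc d)} (hA : A ⊆ unitCube d)
      (h : ENNReal.ofReal (1 - ρ) ≤ dyadicContent s A) :=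
    ofReal_lt_content_of_le_dyadicContent (L := 1 - 2 * ρ) (by linarith : (0 : ℝ) < d - ε) hs
      (by linarith) (by linarith) hA h
  obtain ⟨f, M, hf, rfl, hfM⟩ :=
    exists_continuous_forall_exists_isCubeFrostmanWeight hE hEc (hcontent hEc hcE)
  obtain ⟨g, M', hg, rfl, hgM⟩ :=
    exists_continuous_forall_exists_isCubeFrostmanWeight hF hFc (hcontent hFc hcF)
  obtain ⟨a, b, hab⟩ := exists_dist_eq_of_forall_abs_dist_sub_le hf hg (M := M) (M' := M')
    (t := t) (tendsto_two_mul_half_pow_add k) fun n => by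
      obtain ⟨S, w, hS, hw, hmass⟩ := hfM n (n + k)
      obtain ⟨S', w', hS', hw', hmass'⟩ := hgM n (n + k)
      obtain ⟨p, hp, p', hp', hpp'⟩ := hpair (n + k) (by lia) S S' w w' hw hw' hmass hmass' t ht
      obtain ⟨a, ha, rfl⟩ := hS hp
      obtain ⟨b, hb, rfl⟩ := hS' hp'
      exact ⟨a, b, ha, hb, hpp'⟩
  exact ⟨f a, mem_range_self a, g b, mem_range_self b, hab⟩

/-- Theorem 1.2(a): for `d ≥ 2` there are dimensional constants
`ā_d, b̄_d, ρ_d, ε̄_d ∈ (0,1)` such that for all Borel `E, F ⊆ [0,1]^d` and all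
`s ≥ d - ε̄_d`, if `min{H^s_∞(E), H^s_∞(F)} ≥ 1 - ρ_d` then `Δ(E,F) ⊇ [ā_d, b̄_d]`. -/
theorem statement1 (d : ℕ) (hd : 2 ≤ d) :
    ∃ a b ρ ε : ℝ, a ∈ Ioo (0:ℝ) 1 ∧ b ∈ Ioo (0:ℝ) 1 ∧ ρ ∈ Ioo (0:ℝ) 1 ∧ ε ∈ Ioo (0:ℝ) 1 ∧
      ∀ E F : Set (Euc d), MeasurableSet E → MeasurableSet F →
        E ⊆ unitCube d → F ⊆ unitCube d →
        ∀ s : ℝ, (d : ℝ) - ε ≤ s →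
        ENNReal.ofReal (1 - ρ) ≤ dyadicContent s E →
        ENNReal.ofReal (1 - ρ) ≤ dyadicContent s F →
        Icc a b ⊆ distSet E F := by
  obtain ⟨ρ, ε, hρ, hε, h⟩ := statement1_general d hd
  exact ⟨1 / 8, 1 / 4, ρ, ε, by norm_num, by norm_num, hρ, hε,
    fun E F hE hF => h E F hE.analyticSet hF.analyticSet⟩
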